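/- arXiv:1511.00802 — 5 statements merged into one kernel-verified Lean document; each statement's English description precedes it below -/
import Mathlib

section
/- Let q ∈ ℂ∖{0} be a non-root of unity and let O_q(ℂ²) = ℂ⟨x,y⟩/(xy − q·yx) be the quantized coordinate ring of affine 2-space. Let B be the polynomial ring ℂ[x,y] with Poisson bracket determined by {x,y} = xy. Then the map sending ⟨0⟩ ↦ ⟨0⟩, ⟨x⟩ ↦ ⟨x⟩, ⟨y⟩ ↦ ⟨y⟩, ⟨x−μ, y⟩ ↦ ⟨x−μ, y⟩ and ⟨x, y−ν⟩ ↦ ⟨x, y−ν⟩ (for μ, ν ∈ ℂ) is a well-defined homeomorphism from spec O_q(ℂ²) onto Pspec B. -/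
/-!
The ordered monomials `xⁱyʲ` form a basis of `O_q(ℂ²)`, which gives a linear isomorphism
`symb : O_q(ℂ²) → ℂ[x,y]`. The homeomorphism is simply `P ↦ symb P`.

Left multiplication by `x` and right multiplication by `y` on `O_q(ℂ²)` correspond to ordinary
multiplications, so `symb` maps every two-sided ideal to an ideal of `ℂ[x,y]` (`toPol`); the other
two multiplications become `f ↦ y f(q⁻¹x, y)` and `f ↦ x f(x, q⁻¹y)`. Similarly a Poisson ideal is
an ideal stable under `y·x∂ₓ` and `x·y∂_y`. In both cases the ideal is stable, up to a variable,
under operators that are diagonal on monomials with eigenvalues (`q⁻ⁿ`, respectively `n`)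
separating degrees; hence a nonzero one contains a power of `xy` (`exists_pow_mem`). As `xy` is
normal (respectively Poisson normal), a nonzero prime (respectively Poisson prime) contains `xy`.

Modulo `xy` everything is commutative: `symb` is multiplicative modulo `xy`
(`symb_mul_sub_mem`) and the bracket takes values in `(xy)`, so every ideal of `ℂ[x,y]` containing
`xy` is Poisson and is the symbol of a two-sided ideal. Consequently on both sides the primes are
`0` together with the ordinary prime ideals of `ℂ[x,y]` containing `xy` (`isPrimeTS_iff`,
`isPoissonPrime_iff`). The bijection preserves and reflects membership of elements, hence matches
the Zariski topologies, and it sends generators to generators (`toPol_tsSpan`).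
-/

/-- A Poisson bracket on a commutative ring: a biadditive Lie bracket satisfying
the Leibniz rule. -/
structure PoissonBr (R : Type) [CommRing R] where
  br : R → R → R
  add_left : ∀ a b c, br (a + b) c = br a c + br b c
  skew : ∀ a b, br a b = - br b a
  jacobi : ∀ a b c, br a (br b c) = br (br a b) c + br b (br a c)
  leibniz : ∀ a b c, br (a * b) c = a * br b c + br a c * b

/-- `I` is a Poisson ideal for the bracket `br`: an ideal with `{I, R} ⊆ I`. -/
def IsPoissonIdeal {R : Type} [CommRing R] (br : R → R → R) (I : Ideal R) : Prop :=
  ∀ a ∈ I, ∀ b, br a b ∈ I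

/-- `P` is a Poisson prime ideal: a proper Poisson ideal such that `IJ ⊆ P` implies
`I ⊆ P` or `J ⊆ P` for all Poisson ideals `I`, `J`. -/
def IsPoissonPrime {R : Type} [CommRing R] (br : R → R → R) (P : Ideal R) : Prop :=
  IsPoissonIdeal br P ∧ P ≠ ⊤ ∧
    ∀ I J : Ideal R, IsPoissonIdeal br I → IsPoissonIdeal br J →
      (∀ a ∈ I, ∀ b ∈ J, a * b ∈ P) → I ≤ P ∨ J ≤ P

/-- A prime two-sided ideal of a (not necessarily commutative) ring: a proper
two-sided ideal `P` such that `IJ ⊆ P` implies `I ⊆ P` or `J ⊆ P`. -/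
def IsPrimeTS {R : Type} [Ring R] (P : TwoSidedIdeal R) : Prop :=
  P ≠ ⊤ ∧ ∀ I J : TwoSidedIdeal R, (∀ a ∈ I, ∀ b ∈ J, a * b ∈ P) → I ≤ P ∨ J ≤ P

/-- The two-sided ideal generated by a subset `S` of a ring. -/
def tsSpan {R : Type} [Ring R] (S : Set R) : TwoSidedIdeal R :=
  sInf {J : TwoSidedIdeal R | S ⊆ J}

/-- The spectrum of a ring: prime two-sided ideals. -/
abbrev SpecTS (R : Type) [Ring R] := {P : TwoSidedIdeal R // IsPrimeTS P}

/-- The Zariski topology on the spectrum: closed sets are `{P | I ≤ P}`. -/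
def specTop (R : Type) [Ring R] : TopologicalSpace (SpecTS R) :=
  TopologicalSpace.generateFrom
    {U | ∃ I : TwoSidedIdeal R, U = {P : SpecTS R | ¬ I ≤ P.1}}

/-- The Poisson spectrum of a Poisson algebra: Poisson prime ideals. -/
abbrev PSpecP (R : Type) [CommRing R] (br : R → R → R) := {P : Ideal R // IsPoissonPrime br P}

/-- The Zariski topology on the Poisson spectrum: closed sets are `{P | I ≤ P}`. -/
def pspecTop (R : Type) [CommRing R] (br : R → R → R) : TopologicalSpace (PSpecP R br) :=
  TopologicalSpace.generateFrom
    {U | ∃ I : Ideal R, U = {P : PSpecP R br | ¬ I ≤ P.1}}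

/-- The defining relation `xy = q·yx` of the quantized coordinate ring `O_q(ℂ²)`,
with `x` the generator of index `0` and `y` the generator of index `1`. -/
inductive OqRel (q₀ : ℂ) : FreeAlgebra ℂ (Fin 2) → FreeAlgebra ℂ (Fin 2) → Prop
  | rel : OqRel q₀ (FreeAlgebra.ι ℂ 0 * FreeAlgebra.ι ℂ 1)
      (q₀ • (FreeAlgebra.ι ℂ 1 * FreeAlgebra.ι ℂ 0))

/-- The generator `x` of `O_q(ℂ²)`. -/
noncomputable def xO (q₀ : ℂ) : RingQuot (OqRel q₀) :=
  RingQuot.mkAlgHom ℂ (OqRel q₀) (FreeAlgebra.ι ℂ 0)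

/-- The generator `y` of `O_q(ℂ²)`. -/
noncomputable def yO (q₀ : ℂ) : RingQuot (OqRel q₀) :=
  RingQuot.mkAlgHom ℂ (OqRel q₀) (FreeAlgebra.ι ℂ 1)

namespace QPlane

open MvPolynomial

/-- The polynomial ring `ℂ[x,y]`. -/
abbrev Pol := MvPolynomial (Fin 2) ℂ

/-- The quantum plane `O_q(ℂ²)`. -/
abbrev Oq (q : ℂ) := RingQuot (OqRel q)

/-! ### The linear isomorphism between `O_q(ℂ²)` and `ℂ[x,y]` -/

/-- The algebra endomorphism of `ℂ[x,y]` scaling the `k`-th variable by `q⁻¹`. -/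
noncomputable def scale (q : ℂ) (k : Fin 2) : Pol →ₐ[ℂ] Pol :=
  aeval fun j => if j = k then q⁻¹ • X j else X j

lemma scale_X_self (q : ℂ) (k : Fin 2) : scale q k (X k) = q⁻¹ • X k := by
  simp [scale]

lemma scale_X_ne (q : ℂ) {k j : Fin 2} (h : j ≠ k) : scale q k (X j) = X j := by
  simp [scale, h]

lemma scale_monomial (q : ℂ) (k : Fin 2) (m : Fin 2 →₀ ℕ) (c : ℂ) :
    scale q k (monomial m c) = (q⁻¹ ^ m k) • monomial m c := by
  rw [scale, aeval_monomial, Finsupp.prod_fintype _ _ (by simp), monomial_eq,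
    Finsupp.prod_fintype _ _ (by simp)]
  fin_cases k <;> simp [smul_pow, algebraMap_eq]

lemma coeff_scale (q : ℂ) (k : Fin 2) (f : Pol) (m : Fin 2 →₀ ℕ) :
    coeff m (scale q k f) = q⁻¹ ^ m k * coeff m f := by
  induction f using MvPolynomial.induction_on' with
  | monomial n c =>
    rw [scale_monomial, coeff_smul, coeff_monomial]
    split_ifs with h <;> simp [h]
  | add f g hf hg => simp [hf, hg, mul_add]

lemma scale_comm (q : ℂ) (f : Pol) : scale q 0 (scale q 1 f) = scale q 1 (scale q 0 f) := by
  ext m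
  simp only [coeff_scale]
  ring

/-- Scaling one variable does not change a polynomial modulo that variable. -/
lemma scale_sub_mem (q : ℂ) (k : Fin 2) (f : Pol) :
    scale q k f - f ∈ Ideal.span {(X k : Pol)} := by
  induction f using MvPolynomial.induction_on with
  | C a => simp [scale, algebraMap_eq]
  | add f g hf hg =>
    rw [map_add, add_sub_add_comm]
    exact Ideal.add_mem _ hf hg
  | mul_X f j hf =>
    rw [map_mul]
    by_cases h : j = k
    · subst h
      rw [scale_X_self, mul_smul_comm, ← smul_mul_assoc, ← sub_mul]
      exact Ideal.mul_mem_left _ _ (Ideal.mem_span_singleton_self _)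
    · rw [scale_X_ne q h, ← sub_mul]
      exact Ideal.mul_mem_right _ _ hf

variable {q : ℂ}

lemma xO_mul_yO (q : ℂ) : xO q * yO q = q • (yO q * xO q) := by
  have := RingQuot.mkAlgHom_rel ℂ (OqRel.rel (q₀ := q))
  simpa [xO, yO] using this

lemma oq_induction {p : Oq q → Prop} (scal : ∀ c : ℂ, p (algebraMap ℂ _ c))
    (hx : p (xO q)) (hy : p (yO q)) (mul : ∀ a b, p a → p b → p (a * b))
    (add : ∀ a b, p a → p b → p (a + b)) (a : Oq q) : p a := by
  obtain ⟨a, rfl⟩ := RingQuot.mkAlgHom_surjective ℂ (OqRel q) a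
  induction a with
  | grade0 r => simpa using scal r
  | grade1 i => fin_cases i; exacts [hx, hy]
  | mul a b ha hb => simpa using mul _ _ ha hb
  | add a b ha hb => simpa using add _ _ ha hb

/-- The action of `O_q(ℂ²)` on `ℂ[x,y]` obtained from left multiplication through the basis of
ordered monomials `xⁱyʲ`: `x` acts by multiplication and `y` by `f(x,y) ↦ y f(q⁻¹x,y)`. -/
noncomputable def rho (hq : q ≠ 0) : Oq q →ₐ[ℂ] Module.End ℂ Pol :=
  RingQuot.liftAlgHom ℂ ⟨FreeAlgebra.lift ℂ
    ![LinearMap.mulLeft ℂ (X 0 : Pol), LinearMap.mulLeft ℂ (X 1 : Pol) * (scale q 0).toLinearMap],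
    by
      rintro _ _ ⟨⟩
      ext1 f
      ext1
      simp [scale_X_self, hq, mul_left_comm]⟩

lemma rho_x (hq : q ≠ 0) (f : Pol) : rho hq (xO q) f = X 0 * f := by
  simp [rho, xO]

lemma rho_y (hq : q ≠ 0) (f : Pol) : rho hq (yO q) f = X 1 * scale q 0 f := by
  simp [rho, yO]

/-- The linear map sending a polynomial to the corresponding combination of ordered monomials. -/
noncomputable def ord (q : ℂ) : Pol →ₗ[ℂ] Oq q :=
  (basisMonomials (Fin 2) ℂ).constr ℂ fun m => xO q ^ m 0 * yO q ^ m 1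

lemma ord_monomial (m : Fin 2 →₀ ℕ) (c : ℂ) :
    ord q (monomial m c) = c • (xO q ^ m 0 * yO q ^ m 1) := by
  have h : (monomial m c : Pol) = c • basisMonomials (Fin 2) ℂ m := by
    simp [smul_monomial]
  rw [h, map_smul, ord, Module.Basis.constr_basis]

lemma yO_mul_pow (hq : q ≠ 0) (n : ℕ) :
    yO q * xO q ^ n = (q⁻¹ ^ n) • (xO q ^ n * yO q) := by
  have h1 : yO q * xO q = q⁻¹ • (xO q * yO q) := by rw [xO_mul_yO, inv_smul_smul₀ hq]
  induction n with
  | zero => simp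
  | succ n ih =>
    rw [pow_succ, ← mul_assoc, ih, smul_mul_assoc, mul_assoc, h1, mul_smul_comm, smul_smul,
      ← pow_succ, mul_assoc]

lemma ord_x (f : Pol) : ord q (X 0 * f) = xO q * ord q f := by
  induction f using MvPolynomial.induction_on' with
  | monomial n c =>
    rw [X, monomial_mul, ord_monomial, ord_monomial]
    simp [pow_add, mul_assoc]
  | add f g hf hg => simp [mul_add, hf, hg]

lemma ord_y (hq : q ≠ 0) (f : Pol) : ord q (X 1 * scale q 0 f) = yO q * ord q f := by
  induction f using MvPolynomial.induction_on' with
  | monomial n c =>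
    rw [scale_monomial, smul_monomial, X, monomial_mul, ord_monomial, ord_monomial,
      mul_smul_comm c (yO q), ← mul_assoc, yO_mul_pow hq]
    simp [pow_add, mul_assoc, smul_smul, mul_comm]
  | add f g hf hg => simp [mul_add, hf, hg]

/-- `ord` intertwines `rho` with left multiplication. -/
lemma ord_rho (hq : q ≠ 0) (a : Oq q) : ∀ f, ord q (rho hq a f) = a * ord q f := by
  induction a using oq_induction with
  | scal c =>
    intro f
    rw [AlgHom.commutes, Module.algebraMap_end_apply, map_smul, Algebra.smul_def]
  | hx => intro f; rw [rho_x, ord_x]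
  | hy => intro f; rw [rho_y, ord_y hq]
  | mul a b ha hb => intro f; rw [map_mul, Module.End.mul_apply, ha, hb, mul_assoc]
  | add a b ha hb => intro f; rw [map_add, LinearMap.add_apply, map_add, ha, hb, add_mul]

/-- The symbol map `O_q(ℂ²) → ℂ[x,y]`, sending the ordered monomial `xⁱyʲ` to `xⁱyʲ`. -/
noncomputable def symb (hq : q ≠ 0) : Oq q →ₗ[ℂ] Pol :=
  (LinearMap.applyₗ (1 : Pol)).comp (rho hq).toLinearMap

lemma symb_apply (hq : q ≠ 0) (a : Oq q) : symb hq a = rho hq a 1 := by simp [symb]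

lemma symb_mul (hq : q ≠ 0) (a b : Oq q) : symb hq (a * b) = rho hq a (symb hq b) := by
  simp [symb_apply]

lemma symb_one (hq : q ≠ 0) : symb hq 1 = 1 := by simp [symb_apply]

lemma symb_scal (hq : q ≠ 0) (c : ℂ) : symb hq (algebraMap ℂ _ c) = C c := by
  simp [symb_apply, Module.algebraMap_end_apply, smul_eq_C_mul]

lemma symb_x (hq : q ≠ 0) : symb hq (xO q) = X 0 := by simp [symb_apply, rho_x]

lemma symb_y (hq : q ≠ 0) : symb hq (yO q) = X 1 := by simp [symb_apply, rho_y]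

lemma symb_x_mul (hq : q ≠ 0) (a : Oq q) : symb hq (xO q * a) = X 0 * symb hq a := by
  rw [symb_mul, rho_x]

lemma symb_y_mul (hq : q ≠ 0) (a : Oq q) : symb hq (yO q * a) = X 1 * scale q 0 (symb hq a) := by
  rw [symb_mul, rho_y]

lemma rho_mul_X (hq : q ≠ 0) (a : Oq q) : ∀ f, rho hq a (X 1 * f) = X 1 * rho hq a f := by
  induction a using oq_induction with
  | scal c => intro f; simp [Module.algebraMap_end_apply]
  | hx => intro f; simp only [rho_x]; ring
  | hy => intro f; simp only [rho_y, map_mul, scale_X_ne q (show (1 : Fin 2) ≠ 0 by decide)]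
  | mul a b ha hb => intro f; simp [ha, hb]
  | add a b ha hb => intro f; simp [ha, hb, mul_add]

lemma rho_mul_scale (hq : q ≠ 0) (a : Oq q) :
    ∀ f, rho hq a (X 0 * scale q 1 f) = X 0 * scale q 1 (rho hq a f) := by
  induction a using oq_induction with
  | scal c => intro f; simp [Module.algebraMap_end_apply]
  | hx =>
    intro f
    simp only [rho_x, map_mul, scale_X_ne q (show (0 : Fin 2) ≠ 1 by decide)]
  | hy =>
    intro f
    simp only [rho_y, map_mul, scale_X_self, scale_comm, smul_mul_assoc, mul_smul_comm]
    congr 1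
    ring
  | mul a b ha hb => intro f; simp [ha, hb]
  | add a b ha hb => intro f; simp [ha, hb, mul_add]

lemma symb_mul_y (hq : q ≠ 0) (a : Oq q) : symb hq (a * yO q) = X 1 * symb hq a := by
  rw [symb_mul, symb_y, symb_apply, ← rho_mul_X, mul_one]

lemma symb_mul_x (hq : q ≠ 0) (a : Oq q) : symb hq (a * xO q) = X 0 * scale q 1 (symb hq a) := by
  rw [symb_mul, symb_x, symb_apply, ← rho_mul_scale, map_one, mul_one]

lemma ord_symb (hq : q ≠ 0) (a : Oq q) : ord q (symb hq a) = a := by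
  have h1 : ord q 1 = 1 := by
    have := ord_monomial (q := q) 0 1
    simpa using this
  rw [symb_apply, ord_rho, h1, mul_one]

lemma symb_injective (hq : q ≠ 0) : Function.Injective (symb hq) :=
  Function.LeftInverse.injective (ord_symb hq)

lemma symb_surjective (hq : q ≠ 0) : Function.Surjective (symb hq) := by
  intro f
  induction f using MvPolynomial.induction_on with
  | C a => exact ⟨_, symb_scal hq a⟩
  | add f g hf hg =>
    obtain ⟨a, rfl⟩ := hf
    obtain ⟨b, rfl⟩ := hg
    exact ⟨a + b, map_add _ _ _⟩
  | mul_X f j hf =>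
    obtain ⟨a, rfl⟩ := hf
    fin_cases j
    · exact ⟨xO q * a, by rw [symb_x_mul, mul_comm]; rfl⟩
    · exact ⟨a * yO q, by rw [symb_mul_y, mul_comm]; rfl⟩

/-- The symbol map is multiplicative modulo `xy`. -/
lemma symb_mul_sub_mem (hq : q ≠ 0) (a : Oq q) :
    ∀ b, symb hq (a * b) - symb hq a * symb hq b ∈ Ideal.span {(X 0 * X 1 : Pol)} := by
  induction a using oq_induction with
  | scal c =>
    intro b
    rw [symb_scal, ← Algebra.smul_def, map_smul, smul_eq_C_mul, sub_self]
    exact zero_mem _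
  | hx => intro b; simp [symb_x_mul, symb_x]
  | hy =>
    intro b
    rw [symb_y_mul, symb_y, ← mul_sub]
    obtain ⟨c, hc⟩ := Ideal.mem_span_singleton'.1 (scale_sub_mem q 0 (symb hq b))
    rw [← hc]
    exact Ideal.mem_span_singleton'.2 ⟨c, by ring⟩
  | mul a a' ha ha' =>
    intro b
    have h : symb hq (a * a' * b) - symb hq (a * a') * symb hq b =
        (symb hq (a * (a' * b)) - symb hq a * symb hq (a' * b))
        + symb hq a * (symb hq (a' * b) - symb hq a' * symb hq b)
        - (symb hq (a * a') - symb hq a * symb hq a') * symb hq b := by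
      rw [mul_assoc a a' b]
      ring
    rw [h]
    exact sub_mem (add_mem (ha _) (Ideal.mul_mem_left _ _ (ha' _)))
      (Ideal.mul_mem_right _ _ (ha _))
  | add a a' ha ha' =>
    intro b
    have h : symb hq ((a + a') * b) - symb hq (a + a') * symb hq b =
        (symb hq (a * b) - symb hq a * symb hq b)
        + (symb hq (a' * b) - symb hq a' * symb hq b) := by
      rw [add_mul, map_add, map_add]
      ring
    rw [h]
    exact add_mem (ha _) (ha' _)

/-! ### Ideals stable under diagonal operators -/

/-- If a nonzero ideal `V` of `ℂ[x,y]` is stable, up to multiplication by a variable, under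
operators that multiply the monomials by scalars distinguishing their degrees in `x` and in `y`,
then `V` contains a power of `xy`. A nonzero element of `V` with at least two terms can be
replaced by one with fewer terms, so `V` contains a monomial. -/
lemma exists_pow_mem {V : Ideal Pol} {a : Fin 2 → ℕ → ℂ} (ha : ∀ k, Function.Injective (a k))
    (h : ∀ k, ∀ f ∈ V, ∃ g l, (∀ m, coeff m g = a k (m k) * coeff m f) ∧ X l * g ∈ V)
    (hV : V ≠ ⊥) : ∃ n : ℕ, (X 0 * X 1 : Pol) ^ n ∈ V := by
  have key : ∀ n : ℕ, ∀ f ∈ V, f ≠ 0 → f.support.card = n → ∃ m, (monomial m (1 : ℂ) : Pol) ∈ V := by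
    intro n
    induction n using Nat.strong_induction_on with
    | _ n ih =>
      intro f hf hf0 hn
      obtain ⟨m, hm⟩ := support_nonempty.2 hf0
      by_cases hs : ∃ m' ∈ f.support, m' ≠ m
      · obtain ⟨m', hm', hne⟩ := hs
        obtain ⟨k, hk⟩ : ∃ k, m' k ≠ m k := by
          by_contra! hc
          exact hne (Finsupp.ext hc)
        obtain ⟨g, l, hg, hgV⟩ := h k f hf
        -- Subtracting `a k (m k) • f` kills the term of `f` at `m` and keeps the one at `m'`.
        have hco : ∀ i, coeff i (g - C (a k (m k)) * f) = (a k (i k) - a k (m k)) * coeff i f := by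
          intro i
          rw [coeff_sub, hg, coeff_C_mul]
          ring
        have hsub : (g - C (a k (m k)) * f).support ⊂ f.support := by
          rw [Finset.ssubset_iff_of_subset]
          · exact ⟨m, hm, by simp [mem_support_iff, hco]⟩
          · intro i hi
            rw [mem_support_iff, hco] at hi
            exact mem_support_iff.2 (right_ne_zero_of_mul hi)
        refine ih _ (hn ▸ Finset.card_lt_card hsub) (X l * (g - C (a k (m k)) * f)) ?_ ?_ ?_
        · rw [mul_sub]
          exact sub_mem hgV (Ideal.mul_mem_left _ _ (Ideal.mul_mem_left _ _ hf))
        · refine mul_ne_zero (X_ne_zero l) fun h0 => ?_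
          have := hco m'
          rw [h0, coeff_zero, eq_comm, mul_eq_zero, sub_eq_zero] at this
          exact this.elim (fun e => hk (ha k e)) (mem_support_iff.1 hm')
        · rw [support_X_mul, Finset.card_map]
      · push Not at hs
        refine ⟨m, ?_⟩
        have hfm : f = monomial m (coeff m f) := by
          ext i
          rw [coeff_monomial]
          split_ifs with him
          · rw [him]
          · by_contra hi
            exact him (hs i (mem_support_iff.2 hi)).symm
        have h1 : (monomial m (1 : ℂ) : Pol) = C (coeff m f)⁻¹ * f := by
          conv_rhs => rw [hfm]
          simp [C_mul_monomial, inv_mul_cancel₀ (mem_support_iff.1 hm)]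
        rw [h1]
        exact Ideal.mul_mem_left _ _ hf
  obtain ⟨f, hf, hf0⟩ := Submodule.exists_mem_ne_zero_of_ne_bot hV
  obtain ⟨m, hm⟩ := key _ f hf hf0 rfl
  refine ⟨m 0 + m 1, Ideal.mem_of_dvd _ ?_ hm⟩
  rw [monomial_eq, Finsupp.prod_fintype _ _ (by simp), Fin.prod_univ_two, C_1, one_mul, mul_pow]
  exact mul_dvd_mul (pow_dvd_pow _ (by omega)) (pow_dvd_pow _ (by omega))

/-! ### Poisson ideals of `ℂ[x,y]` -/

/-- The explicit Poisson bracket on `ℂ[x,y]` with `{x,y} = xy`. -/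
noncomputable def pbr (f g : Pol) : Pol :=
  X 0 * X 1 * (pderiv 0 f * pderiv 1 g - pderiv 1 f * pderiv 0 g)

lemma pbr_mul (f g h : Pol) : pbr (f * g) h = f * pbr g h + g * pbr f h := by
  simp only [pbr, pderiv_mul]
  ring

lemma br_eq_pbr (B : PoissonBr Pol)
    (hBsmul : ∀ (c : ℂ) (a b : Pol), B.br (c • a) b = c • B.br a b)
    (hBxy : B.br (X 0) (X 1) = X 0 * X 1) : B.br = pbr := by
  -- A bracket is a derivation in its first argument, so it is determined by its values on `x`, `y`.
  have hder : ∀ h f, B.br f h = pderiv 0 f * B.br (X 0) h + pderiv 1 f * B.br (X 1) h := by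
    intro h
    let D : Derivation ℂ Pol Pol := Derivation.mk'
      { toFun := fun f => B.br f h
        map_add' := fun a b => B.add_left a b h
        map_smul' := fun c a => hBsmul c a h }
      (fun a b => by simp [B.leibniz, mul_comm])
    have hD : D = B.br (X 0) h • pderiv 0 + B.br (X 1) h • pderiv 1 := by
      refine derivation_ext fun i => ?_
      fin_cases i <;> simp [D, pderiv_X]
    intro f
    have := congrArg (fun E : Derivation ℂ Pol Pol => E f) hD
    simpa [D, mul_comm] using this
  have hself : ∀ f, B.br f f = 0 := fun f => self_eq_neg.1 (B.skew f f)
  funext f g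
  rw [hder g f, B.skew (X 0), B.skew (X 1), hder (X 0) g, hder (X 1) g, hself, hself,
    B.skew (X 1) (X 0), hBxy, pbr]
  ring

lemma pbr_mem_span (f g : Pol) : pbr f g ∈ Ideal.span {(X 0 * X 1 : Pol)} :=
  Ideal.mul_mem_right _ _ (Ideal.mem_span_singleton_self _)

lemma isPoissonIdeal_of_mem {V : Ideal Pol} (hV : X 0 * X 1 ∈ V) : IsPoissonIdeal pbr V :=
  fun f _ g => (Ideal.span_singleton_le_iff_mem _).2 hV (pbr_mem_span f g)

lemma coeff_X_mul_pderiv (k : Fin 2) (f : Pol) (m : Fin 2 →₀ ℕ) :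
    coeff m (X k * pderiv k f) = (m k : ℂ) * coeff m f := by
  induction f using MvPolynomial.induction_on' with
  | monomial n c =>
    rw [X_mul_pderiv_monomial, coeff_smul, coeff_monomial]
    split_ifs with h <;> simp [h]
  | add f g hf hg => simp [hf, hg, mul_add]

lemma exists_pow_mem_of_isPoissonIdeal {V : Ideal Pol} (hP : IsPoissonIdeal pbr V) (hV : V ≠ ⊥) :
    ∃ n : ℕ, (X 0 * X 1 : Pol) ^ n ∈ V := by
  refine exists_pow_mem (a := fun _ n => (n : ℂ)) (fun _ => Nat.cast_injective) ?_ hV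
  intro k f hf
  refine ⟨X k * pderiv k f, 1 - k, coeff_X_mul_pderiv k f, ?_⟩
  fin_cases k
  · have h : (X 1 * (X 0 * pderiv 0 f) : Pol) = pbr f (X 1) := by
      simp [pbr, pderiv_X]
      ring
    exact h ▸ hP f hf (X 1)
  · have h : (X 0 * (X 1 * pderiv 1 f) : Pol) = -pbr f (X 0) := by
      simp [pbr, pderiv_X]
      ring
    exact h ▸ neg_mem (hP f hf (X 0))

/-- `xy` is prime-like with respect to Poisson prime ideals, because `{xy, ℂ[x,y]} ⊆ (xy)`: the
colon ideal `(P : xy)` and its annihilator modulo `P` are Poisson ideals. -/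
lemma mem_or_mem_of_isPoissonPrime {P : Ideal Pol} (hP : IsPoissonPrime pbr P) {f : Pol}
    (hf : X 0 * X 1 * f ∈ P) : X 0 * X 1 ∈ P ∨ f ∈ P := by
  let N : Ideal Pol :=
    { carrier := {f | X 0 * X 1 * f ∈ P}
      zero_mem' := by simp
      add_mem' := fun {a b} ha hb => by
        simp only [Set.mem_ofPred_eq, mul_add] at *
        exact add_mem ha hb
      smul_mem' := fun c a ha => by
        simp only [Set.mem_ofPred_eq, smul_eq_mul, mul_left_comm _ c] at *
        exact Ideal.mul_mem_left _ _ ha }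
  let K : Ideal Pol :=
    { carrier := {g | ∀ f ∈ N, g * f ∈ P}
      zero_mem' := by simp
      add_mem' := fun {a b} ha hb f hf => by
        rw [add_mul]
        exact add_mem (ha f hf) (hb f hf)
      smul_mem' := fun c a ha f hf => by
        rw [smul_eq_mul, mul_assoc]
        exact Ideal.mul_mem_left _ _ (ha f hf) }
  have hN : IsPoissonIdeal pbr N := by
    intro f hf g
    have h : X 0 * X 1 * pbr f g = pbr (X 0 * X 1 * f) g
        - (X 1 * pderiv 1 g - X 0 * pderiv 0 g) * (X 0 * X 1 * f) := by
      simp [pbr, pderiv_X]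
      ring
    change X 0 * X 1 * pbr f g ∈ P
    rw [h]
    exact sub_mem (hP.1 _ hf g) (Ideal.mul_mem_left _ _ hf)
  have hK : IsPoissonIdeal pbr K := by
    intro g hg h f hf
    have e : pbr g h * f = pbr (g * f) h - g * pbr f h := by
      rw [pbr_mul]
      ring
    rw [e]
    exact sub_mem (hP.1 _ (hg f hf) h) (hg _ (hN f hf h))
  rcases hP.2.2 K N hK hN (fun g hg f hf => hg f hf) with h | h
  · exact Or.inl (h fun f hf => hf)
  · exact Or.inr (h hf)

lemma mem_of_isPoissonPrime {P : Ideal Pol} (hP : IsPoissonPrime pbr P) (h0 : P ≠ ⊥) :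
    X 0 * X 1 ∈ P := by
  obtain ⟨n, hn⟩ := exists_pow_mem_of_isPoissonIdeal hP.1 h0
  induction n with
  | zero => exact absurd ((Ideal.eq_top_iff_one _).2 (by simpa using hn)) hP.2.1
  | succ n ih =>
    rw [pow_succ'] at hn
    exact (mem_or_mem_of_isPoissonPrime hP hn).elim id ih

lemma sup_span_mul_mem {V : Ideal Pol} {f g a b : Pol} (hfg : f * g ∈ V)
    (ha : a ∈ V ⊔ Ideal.span {f}) (hb : b ∈ V ⊔ Ideal.span {g}) : a * b ∈ V := by
  obtain ⟨v, hv, _, hc, rfl⟩ := Submodule.mem_sup.1 ha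
  obtain ⟨w, hw, _, hd, rfl⟩ := Submodule.mem_sup.1 hb
  obtain ⟨c, rfl⟩ := Ideal.mem_span_singleton'.1 hc
  obtain ⟨d, rfl⟩ := Ideal.mem_span_singleton'.1 hd
  have h : (v + c * f) * (w + d * g) = v * (w + d * g) + c * f * w + c * d * (f * g) := by ring
  rw [h]
  exact add_mem (add_mem (Ideal.mul_mem_right _ _ hv) (Ideal.mul_mem_left _ _ hw))
    (Ideal.mul_mem_left _ _ hfg)

lemma isPoissonPrime_of_isPrime {V : Ideal Pol} (hV : IsPoissonIdeal pbr V) (hp : V.IsPrime) :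
    IsPoissonPrime pbr V :=
  ⟨hV, hp.ne_top, fun _ _ _ _ h => hp.mul_le.1 (Ideal.mul_le.2 h)⟩

/-- The nonzero Poisson primes are the prime ideals containing `xy`: every ideal containing `xy`
is a Poisson ideal. -/
lemma isPoissonPrime_iff {V : Ideal Pol} :
    IsPoissonPrime pbr V ↔ V = ⊥ ∨ (X 0 * X 1 ∈ V ∧ V.IsPrime) := by
  constructor
  · intro hP
    refine or_iff_not_imp_left.2 fun h0 => ?_
    have hw := mem_of_isPoissonPrime hP h0
    refine ⟨hw, hP.2.1, fun {f g} hfg => ?_⟩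
    have hI : ∀ f : Pol, IsPoissonIdeal pbr (V ⊔ Ideal.span {f}) := fun f =>
      isPoissonIdeal_of_mem (Ideal.mem_sup_left hw)
    exact (hP.2.2 _ _ (hI f) (hI g) fun a ha b hb => sup_span_mul_mem hfg ha hb).imp
      (fun h => h (Ideal.mem_sup_right (Ideal.mem_span_singleton_self _)))
      (fun h => h (Ideal.mem_sup_right (Ideal.mem_span_singleton_self _)))
  · rintro (rfl | ⟨hw, hp⟩)
    · refine isPoissonPrime_of_isPrime (fun f hf g => ?_) Ideal.isPrime_bot
      rw [Ideal.mem_bot.1 hf]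
      simp [pbr]
    · exact isPoissonPrime_of_isPrime (isPoissonIdeal_of_mem hw) hp

/-! ### Two-sided ideals of `O_q(ℂ²)` -/

/-- The image of a two-sided ideal under the symbol map. It is an ideal of `ℂ[x,y]` because left
multiplication by `x` and right multiplication by `y` become ordinary multiplications. -/
noncomputable def toPol (hq : q ≠ 0) (I : TwoSidedIdeal (Oq q)) : Ideal Pol where
  carrier := {f | ∃ a ∈ I, symb hq a = f}
  zero_mem' := ⟨0, I.zero_mem, map_zero _⟩
  add_mem' := by
    rintro _ _ ⟨a, ha, rfl⟩ ⟨b, hb, rfl⟩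
    exact ⟨a + b, I.add_mem ha hb, map_add _ _ _⟩
  smul_mem' := by
    intro c
    induction c using MvPolynomial.induction_on with
    | C c =>
      rintro _ ⟨a, ha, rfl⟩
      refine ⟨algebraMap ℂ _ c * a, I.mul_mem_left _ _ ha, ?_⟩
      rw [← Algebra.smul_def, map_smul, smul_eq_C_mul, smul_eq_mul]
    | add f g hf hg =>
      intro p hp
      obtain ⟨a, ha, hfa⟩ := hf hp
      obtain ⟨b, hb, hgb⟩ := hg hp
      exact ⟨a + b, I.add_mem ha hb, by rw [map_add, hfa, hgb, add_smul]⟩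
    | mul_X f j hf =>
      rintro _ ⟨a, ha, rfl⟩
      rw [mul_smul]
      apply hf
      fin_cases j
      · exact ⟨xO q * a, I.mul_mem_left _ _ ha, symb_x_mul hq a⟩
      · exact ⟨a * yO q, I.mul_mem_right _ _ ha, symb_mul_y hq a⟩

lemma symb_mem_toPol (hq : q ≠ 0) {I : TwoSidedIdeal (Oq q)} {a : Oq q} :
    symb hq a ∈ toPol hq I ↔ a ∈ I :=
  ⟨fun ⟨_, hb, e⟩ => symb_injective hq e ▸ hb, fun h => ⟨a, h, rfl⟩⟩

lemma toPol_injective (hq : q ≠ 0) : Function.Injective (toPol hq) := fun I J h =>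
  TwoSidedIdeal.ext fun a => by rw [← symb_mem_toPol hq, h, symb_mem_toPol]

lemma toPol_bot (hq : q ≠ 0) : toPol hq ⊥ = ⊥ := by
  refine (Submodule.eq_bot_iff _).2 ?_
  rintro _ ⟨a, ha, rfl⟩
  rw [(TwoSidedIdeal.mem_bot _).1 ha, map_zero]

/-- The preimage under the symbol map of an ideal of `ℂ[x,y]` containing `xy`. It is two-sided
because the symbol map is multiplicative modulo `xy`. -/
noncomputable def ofPol (hq : q ≠ 0) (V : Ideal Pol) (hV : X 0 * X 1 ∈ V) :
    TwoSidedIdeal (Oq q) :=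
  have hmul : ∀ a b, symb hq (a * b) - symb hq a * symb hq b ∈ V := fun a b =>
    (Ideal.span_singleton_le_iff_mem _).2 hV (symb_mul_sub_mem hq a b)
  TwoSidedIdeal.mk' {a | symb hq a ∈ V} (by simp)
    (fun {a b} ha hb => by
      simp only [Set.mem_ofPred_eq, map_add] at *
      exact add_mem ha hb)
    (fun {a} ha => by
      simp only [Set.mem_ofPred_eq, map_neg] at *
      exact neg_mem ha)
    (fun {a b} hb => ((Submodule.sub_mem_iff_left V (Ideal.mul_mem_left _ _ hb)).1 (hmul a b)))
    (fun {a b} ha => ((Submodule.sub_mem_iff_left V (Ideal.mul_mem_right _ _ ha)).1 (hmul a b)))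

lemma mem_ofPol (hq : q ≠ 0) {V : Ideal Pol} (hV : X 0 * X 1 ∈ V) {a : Oq q} :
    a ∈ ofPol hq V hV ↔ symb hq a ∈ V := by
  simp [ofPol]

lemma toPol_ofPol (hq : q ≠ 0) {V : Ideal Pol} (hV : X 0 * X 1 ∈ V) :
    toPol hq (ofPol hq V hV) = V := by
  ext f
  obtain ⟨a, rfl⟩ := symb_surjective hq f
  rw [symb_mem_toPol, mem_ofPol]

lemma mem_tsSpan {R : Type} [Ring R] {S : Set R} {a : R} (h : a ∈ S) : a ∈ tsSpan S :=
  (TwoSidedIdeal.mem_sInf R).2 fun _ hJ => hJ h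

lemma tsSpan_le {R : Type} [Ring R] {S : Set R} {J : TwoSidedIdeal R} (h : S ⊆ J) :
    tsSpan S ≤ J := sInf_le h

/-- If the symbols of `S` generate an ideal containing `xy`, then this ideal corresponds to the
two-sided ideal generated by `S`. -/
lemma toPol_tsSpan (hq : q ≠ 0) (S : Set (Oq q)) (h : X 0 * X 1 ∈ Ideal.span (symb hq '' S)) :
    toPol hq (tsSpan S) = Ideal.span (symb hq '' S) := by
  apply le_antisymm
  · rintro _ ⟨a, ha, rfl⟩
    rw [← mem_ofPol hq h]
    exact tsSpan_le (fun s hs => (mem_ofPol hq h).2 (Ideal.subset_span ⟨s, hs, rfl⟩)) ha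
  · rw [Ideal.span_le]
    rintro _ ⟨s, hs, rfl⟩
    exact (symb_mem_toPol hq).2 (mem_tsSpan hs)

lemma xy_normal (hq : q ≠ 0) (a : Oq q) : ∃ a', xO q * yO q * a = a' * (xO q * yO q) := by
  have h1 : yO q * xO q = q⁻¹ • (xO q * yO q) := by rw [xO_mul_yO, inv_smul_smul₀ hq]
  induction a using oq_induction with
  | scal c => exact ⟨_, (Algebra.commutes c _).symm⟩
  | hx => exact ⟨q⁻¹ • xO q, by rw [mul_assoc, h1, mul_smul_comm, smul_mul_assoc]⟩
  | hy => exact ⟨q • yO q, by rw [xO_mul_yO]; simp only [smul_mul_assoc, mul_smul_comm, mul_assoc,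
      xO_mul_yO]⟩
  | mul a b ha hb =>
    obtain ⟨a', ha⟩ := ha
    obtain ⟨b', hb⟩ := hb
    exact ⟨a' * b', by rw [← mul_assoc, ha, mul_assoc, hb, mul_assoc]⟩
  | add a b ha hb =>
    obtain ⟨a', ha⟩ := ha
    obtain ⟨b', hb⟩ := hb
    exact ⟨a' + b', by rw [mul_add, ha, hb, add_mul]⟩

lemma symb_xy_pow (hq : q ≠ 0) (n : ℕ) :
    ∃ c : ℂ, c ≠ 0 ∧ symb hq ((xO q * yO q) ^ n) = C c * (X 0 * X 1) ^ n := by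
  induction n with
  | zero => exact ⟨1, one_ne_zero, by simp [symb_one]⟩
  | succ n ih =>
    obtain ⟨c, hc, h⟩ := ih
    refine ⟨q⁻¹ ^ n * c, mul_ne_zero (pow_ne_zero _ (inv_ne_zero hq)) hc, ?_⟩
    rw [pow_succ', mul_assoc, symb_x_mul, symb_y_mul, h, map_mul, map_pow, map_mul, scale_X_self,
      scale_X_ne q (show (1 : Fin 2) ≠ 0 by decide), ← algebraMap_eq, AlgHom.commutes,
      algebraMap_eq, smul_mul_assoc, smul_pow, smul_eq_C_mul, map_mul]
    ring

lemma exists_pow_mem_of_ne_bot (hq : q ≠ 0) (hru : ∀ m : ℕ, 0 < m → q ^ m ≠ 1)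
    {I : TwoSidedIdeal (Oq q)} (hI : I ≠ ⊥) : ∃ n : ℕ, (xO q * yO q) ^ n ∈ I := by
  have hinj : Function.Injective fun n : ℕ => q⁻¹ ^ n := by
    intro a b hab
    wlog hlt : a < b generalizing a b
    · rcases (not_lt.1 hlt).eq_or_lt with h | h
      exacts [h.symm, (this hab.symm h).symm]
    refine absurd ?_ (hru (b - a) (Nat.sub_pos_of_lt hlt))
    have h : q ^ a = q ^ b := by simpa using hab
    rw [pow_sub₀ q hq hlt.le, ← h, mul_inv_cancel₀ (pow_ne_zero _ hq)]
  have hne : toPol hq I ≠ ⊥ := fun h => hI (toPol_injective hq (h.trans (toPol_bot hq).symm))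
  obtain ⟨n, hn⟩ := exists_pow_mem (V := toPol hq I) (a := fun _ n => q⁻¹ ^ n) (fun _ => hinj) (by
    rintro k _ ⟨a, ha, rfl⟩
    refine ⟨scale q k (symb hq a), 1 - k, coeff_scale q k _, ?_⟩
    fin_cases k
    · exact ⟨_, I.mul_mem_left (yO q) a ha, symb_y_mul hq a⟩
    · exact ⟨_, I.mul_mem_right a (xO q) ha, symb_mul_x hq a⟩) hne
  refine ⟨n, (symb_mem_toPol hq).1 ?_⟩
  obtain ⟨c, -, h⟩ := symb_xy_pow hq n
  rw [h]
  exact Ideal.mul_mem_left _ _ hn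

/-- A normal element `w` is prime-like with respect to prime ideals: the colon ideal `(P : w)`
and its left annihilator modulo `P` are two-sided. -/
lemma mem_or_mem_of_isPrimeTS {R : Type} [Ring R] {P : TwoSidedIdeal R} (hP : IsPrimeTS P)
    {w : R} (hw : ∀ a, ∃ a', w * a = a' * w) {f : R} (hf : w * f ∈ P) : w ∈ P ∨ f ∈ P := by
  let N : TwoSidedIdeal R := TwoSidedIdeal.mk' {f | w * f ∈ P}
    (by simp [P.zero_mem])
    (fun {a b} ha hb => by
      simp only [Set.mem_ofPred_eq, mul_add] at *
      exact P.add_mem ha hb)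
    (fun {a} ha => by
      simp only [Set.mem_ofPred_eq, mul_neg] at *
      exact P.neg_mem ha)
    (fun {a b} hb => by
      obtain ⟨a', ha⟩ := hw a
      simp only [Set.mem_ofPred_eq] at *
      rw [← mul_assoc, ha, mul_assoc]
      exact P.mul_mem_left _ _ hb)
    (fun {a b} ha => by
      simp only [Set.mem_ofPred_eq] at *
      rw [← mul_assoc]
      exact P.mul_mem_right _ _ ha)
  have memN : ∀ {a}, a ∈ N ↔ w * a ∈ P := by simp [N]
  let K : TwoSidedIdeal R := TwoSidedIdeal.mk' {g | ∀ f ∈ N, g * f ∈ P}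
    (by simp [P.zero_mem])
    (fun {a b} ha hb f hf => by
      rw [add_mul]
      exact P.add_mem (ha f hf) (hb f hf))
    (fun {a} ha f hf => by
      rw [neg_mul]
      exact P.neg_mem (ha f hf))
    (fun {a b} hb f hf => by
      rw [mul_assoc]
      exact P.mul_mem_left _ _ (hb f hf))
    (fun {a b} ha f hf => by
      rw [mul_assoc]
      exact ha _ (N.mul_mem_left _ _ hf))
  have memK : ∀ {g}, g ∈ K ↔ ∀ f ∈ N, g * f ∈ P := by simp [K]
  rcases hP.2 K N (fun g hg f hf => memK.1 hg f hf) with h | h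
  · exact Or.inl (h (memK.2 fun f hf => memN.1 hf))
  · exact Or.inr (h (memN.2 hf))

lemma mem_of_isPrimeTS (hq : q ≠ 0) (hru : ∀ m : ℕ, 0 < m → q ^ m ≠ 1)
    {P : TwoSidedIdeal (Oq q)} (hP : IsPrimeTS P) (h0 : P ≠ ⊥) : xO q * yO q ∈ P := by
  obtain ⟨n, hn⟩ := exists_pow_mem_of_ne_bot hq hru h0
  induction n with
  | zero => exact absurd (TwoSidedIdeal.eq_top _ (by simpa using hn)) hP.1
  | succ n ih =>
    rw [pow_succ'] at hn
    exact (mem_or_mem_of_isPrimeTS hP (xy_normal hq) hn).elim id ih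

lemma isPrimeTS_bot (hq : q ≠ 0) (hru : ∀ m : ℕ, 0 < m → q ^ m ≠ 1) :
    IsPrimeTS (⊥ : TwoSidedIdeal (Oq q)) := by
  have hpow : ∀ n : ℕ, (xO q * yO q) ^ n ≠ 0 := by
    intro n h0
    obtain ⟨c, hc, h⟩ := symb_xy_pow hq n
    rw [h0, map_zero, eq_comm] at h
    exact mul_ne_zero (C_ne_zero.2 hc) (pow_ne_zero n (mul_ne_zero (X_ne_zero 0) (X_ne_zero 1))) h
  constructor
  · intro h
    have h1 : (1 : Oq q) ∈ (⊥ : TwoSidedIdeal (Oq q)) := h ▸ TwoSidedIdeal.mem_top _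
    exact hpow 0 (by simpa using (TwoSidedIdeal.mem_bot _).1 h1)
  · intro I J h
    by_contra! hc
    obtain ⟨n, hn⟩ := exists_pow_mem_of_ne_bot hq hru fun h : I = ⊥ => hc.1 h.le
    obtain ⟨m, hm⟩ := exists_pow_mem_of_ne_bot hq hru fun h : J = ⊥ => hc.2 h.le
    exact hpow (n + m) (by rw [pow_add]; exact (TwoSidedIdeal.mem_bot _).1 (h _ hn _ hm))

lemma symb_xy (hq : q ≠ 0) : symb hq (xO q * yO q) = X 0 * X 1 := by
  rw [symb_x_mul, symb_y]

/-- The nonzero primes of `O_q(ℂ²)` are, through the symbol map, the prime ideals of `ℂ[x,y]`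
containing `xy`. -/
lemma isPrimeTS_iff (hq : q ≠ 0) (hru : ∀ m : ℕ, 0 < m → q ^ m ≠ 1)
    {P : TwoSidedIdeal (Oq q)} :
    IsPrimeTS P ↔ toPol hq P = ⊥ ∨ (X 0 * X 1 ∈ toPol hq P ∧ (toPol hq P).IsPrime) := by
  have hmul : X 0 * X 1 ∈ toPol hq P → ∀ a b,
      a * b ∈ P ↔ symb hq a * symb hq b ∈ toPol hq P := fun hw a b => by
    have h := (Ideal.span_singleton_le_iff_mem _).2 hw (symb_mul_sub_mem hq a b)
    rw [← symb_mem_toPol hq]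
    exact ⟨fun h' => (Submodule.sub_mem_iff_right _ h').1 h,
      fun h' => (Submodule.sub_mem_iff_left _ h').1 h⟩
  have htop : toPol hq P = ⊤ ↔ P = ⊤ := by
    rw [Ideal.eq_top_iff_one, ← symb_one hq, symb_mem_toPol, TwoSidedIdeal.one_mem_iff]
  constructor
  · intro hP
    refine or_iff_not_imp_left.2 fun h0 => ?_
    have hw : X 0 * X 1 ∈ toPol hq P := by
      rw [← symb_xy hq, symb_mem_toPol]
      exact mem_of_isPrimeTS hq hru hP fun h => h0 (h ▸ toPol_bot hq)
    refine ⟨hw, fun h => hP.1 (htop.1 h), fun {f g} hfg => ?_⟩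
    obtain ⟨a, rfl⟩ := symb_surjective hq f
    obtain ⟨b, rfl⟩ := symb_surjective hq g
    rw [symb_mem_toPol, symb_mem_toPol]
    have hI : ∀ f : Pol, X 0 * X 1 ∈ toPol hq P ⊔ Ideal.span {f} := fun f => Ideal.mem_sup_left hw
    have hmem : ∀ a, a ∈ ofPol hq _ (hI (symb hq a)) := fun a =>
      (mem_ofPol hq _).2 (Ideal.mem_sup_right (Ideal.mem_span_singleton_self _))
    exact (hP.2 (ofPol hq _ (hI (symb hq a))) (ofPol hq _ (hI (symb hq b)))
      fun a' ha b' hb => (hmul hw _ _).2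
        (sup_span_mul_mem hfg ((mem_ofPol hq _).1 ha) ((mem_ofPol hq _).1 hb))).imp
      (fun h => h (hmem a)) (fun h => h (hmem b))
  · rintro (h0 | ⟨hw, hp⟩)
    · rw [← toPol_bot hq] at h0
      rw [toPol_injective hq h0]
      exact isPrimeTS_bot hq hru
    · refine ⟨fun h => hp.ne_top (htop.2 h), fun I J h => ?_⟩
      by_contra! hc
      obtain ⟨a, ha, haP⟩ := SetLike.not_le_iff_exists.1 hc.1
      obtain ⟨b, hb, hbP⟩ := SetLike.not_le_iff_exists.1 hc.2
      rw [← symb_mem_toPol hq] at haP hbP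
      exact (hp.mem_or_mem ((hmul hw a b).1 (h a ha b hb))).elim haP hbP

/-! ### The homeomorphism -/

lemma isPrimeTS_iff_isPoissonPrime (hq : q ≠ 0) (hru : ∀ m : ℕ, 0 < m → q ^ m ≠ 1)
    {P : TwoSidedIdeal (Oq q)} : IsPrimeTS P ↔ IsPoissonPrime pbr (toPol hq P) :=
  (isPrimeTS_iff hq hru).trans isPoissonPrime_iff.symm

/-- The map `P ↦ symb P` from the spectrum to the Poisson spectrum. -/
noncomputable def specMap (hq : q ≠ 0) (hru : ∀ m : ℕ, 0 < m → q ^ m ≠ 1) :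
    SpecTS (Oq q) → PSpecP Pol pbr :=
  fun P => ⟨toPol hq P.1, (isPrimeTS_iff_isPoissonPrime hq hru).1 P.2⟩

lemma specMap_bijective (hq : q ≠ 0) (hru : ∀ m : ℕ, 0 < m → q ^ m ≠ 1) :
    Function.Bijective (specMap hq hru) := by
  refine ⟨fun P P' h => Subtype.ext (toPol_injective hq (congrArg Subtype.val h)), ?_⟩
  rintro ⟨V, hV⟩
  obtain ⟨P, hP⟩ : ∃ P, toPol hq P = V := by
    rcases isPoissonPrime_iff.1 hV with rfl | ⟨hw, -⟩
    exacts [⟨⊥, toPol_bot hq⟩, ⟨_, toPol_ofPol hq hw⟩]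
  subst hP
  exact ⟨⟨P, (isPrimeTS_iff_isPoissonPrime hq hru).2 hV⟩, rfl⟩

lemma le_toPol_iff (hq : q ≠ 0) {J : Ideal Pol} {P : TwoSidedIdeal (Oq q)} :
    J ≤ toPol hq P ↔ tsSpan (symb hq ⁻¹' J) ≤ P := by
  constructor
  · exact fun h => tsSpan_le fun a ha => (symb_mem_toPol hq).1 (h ha)
  · intro h f hf
    obtain ⟨a, rfl⟩ := symb_surjective hq f
    exact (symb_mem_toPol hq).2 (h (mem_tsSpan hf))

lemma toPol_le_toPol_iff (hq : q ≠ 0) {I P : TwoSidedIdeal (Oq q)} :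
    toPol hq I ≤ toPol hq P ↔ I ≤ P := by
  constructor
  · exact fun h a ha => (symb_mem_toPol hq).1 (h ((symb_mem_toPol hq).2 ha))
  · rintro h _ ⟨a, ha, rfl⟩
    exact ⟨a, h ha, rfl⟩

lemma specMap_isHomeomorph (hq : q ≠ 0) (hru : ∀ m : ℕ, 0 < m → q ^ m ≠ 1) :
    @IsHomeomorph _ _ (specTop (Oq q)) (pspecTop Pol pbr) (specMap hq hru) := by
  let := specTop (Oq q)
  let := pspecTop Pol pbr
  let e := Equiv.ofBijective _ (specMap_bijective hq hru)
  have h1 : Continuous e := by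
    refine continuous_generateFrom_iff.2 ?_
    rintro _ ⟨J, rfl⟩
    exact TopologicalSpace.isOpen_generateFrom_of_mem
      ⟨tsSpan (symb hq ⁻¹' J), Set.ext fun P => not_congr (le_toPol_iff hq)⟩
  have h2 : Continuous e.symm := by
    refine continuous_generateFrom_iff.2 ?_
    rintro _ ⟨I, rfl⟩
    refine TopologicalSpace.isOpen_generateFrom_of_mem ⟨toPol hq I, Set.ext fun Q => ?_⟩
    obtain ⟨P, rfl⟩ := e.surjective Q
    change ¬ I ≤ (e.symm (e P)).1 ↔ ¬ toPol hq I ≤ toPol hq P.1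
    rw [e.symm_apply_apply, toPol_le_toPol_iff]
  exact (Homeomorph.mk e h1 h2).isHomeomorph

end QPlane

/-- for `q` not a root of unity, the map `⟨0⟩ ↦ ⟨0⟩`, `⟨x⟩ ↦ ⟨x⟩`,
`⟨y⟩ ↦ ⟨y⟩`, `⟨x-μ,y⟩ ↦ ⟨x-μ,y⟩`, `⟨x,y-ν⟩ ↦ ⟨x,y-ν⟩` is a well-defined
homeomorphism from `spec O_q(ℂ²)` onto `Pspec ℂ[x,y]` where `{x,y} = xy`. -/
theorem stmt_3 (q₀ : ℂ) (hq₀0 : q₀ ≠ 0) (hq₀ru : ∀ m : ℕ, 0 < m → q₀ ^ m ≠ 1)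
    (B : PoissonBr (MvPolynomial (Fin 2) ℂ))
    (hBsmul : ∀ (c : ℂ) (a b : MvPolynomial (Fin 2) ℂ), B.br (c • a) b = c • B.br a b)
    (hBxy : B.br (MvPolynomial.X 0) (MvPolynomial.X 1)
      = MvPolynomial.X 0 * MvPolynomial.X 1) :
    ∃ φ : SpecTS (RingQuot (OqRel q₀)) → PSpecP (MvPolynomial (Fin 2) ℂ) B.br,
      @IsHomeomorph _ _ (specTop (RingQuot (OqRel q₀)))
        (pspecTop (MvPolynomial (Fin 2) ℂ) B.br) φ ∧
      (∀ P : SpecTS (RingQuot (OqRel q₀)), P.1 = ⊥ → (φ P).1 = ⊥) ∧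
      (∀ P : SpecTS (RingQuot (OqRel q₀)), P.1 = tsSpan {xO q₀} →
        (φ P).1 = Ideal.span {MvPolynomial.X 0}) ∧
      (∀ P : SpecTS (RingQuot (OqRel q₀)), P.1 = tsSpan {yO q₀} →
        (φ P).1 = Ideal.span {MvPolynomial.X 1}) ∧
      (∀ (μ : ℂ) (P : SpecTS (RingQuot (OqRel q₀))),
        P.1 = tsSpan {xO q₀ - algebraMap ℂ (RingQuot (OqRel q₀)) μ, yO q₀} →
        (φ P).1 = Ideal.span {MvPolynomial.X 0 - MvPolynomial.C μ, MvPolynomial.X 1}) ∧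
      (∀ (ν : ℂ) (P : SpecTS (RingQuot (OqRel q₀))),
        P.1 = tsSpan {xO q₀, yO q₀ - algebraMap ℂ (RingQuot (OqRel q₀)) ν} →
        (φ P).1 = Ideal.span {MvPolynomial.X 0, MvPolynomial.X 1 - MvPolynomial.C ν}) := by
  have hbr := QPlane.br_eq_pbr B hBsmul hBxy
  clear hBsmul hBxy
  generalize B.br = b at hbr ⊢
  subst hbr
  have hX : ∀ {S : Set (QPlane.Oq q₀)} {T : Set QPlane.Pol} (P : SpecTS (QPlane.Oq q₀)),
      P.1 = tsSpan S → QPlane.symb hq₀0 '' S = T →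
      MvPolynomial.X 0 * MvPolynomial.X 1 ∈ Ideal.span T →
      (QPlane.specMap hq₀0 hq₀ru P).1 = Ideal.span T := by
    rintro S _ P hP rfl hw
    change QPlane.toPol hq₀0 P.1 = _
    rw [hP, QPlane.toPol_tsSpan hq₀0 S hw]
  refine ⟨QPlane.specMap hq₀0 hq₀ru, QPlane.specMap_isHomeomorph hq₀0 hq₀ru,
    fun P hP => ?_, fun P hP => hX P hP ?_ ?_, fun P hP => hX P hP ?_ ?_,
    fun μ P hP => hX P hP ?_ ?_, fun ν P hP => hX P hP ?_ ?_⟩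
  · change QPlane.toPol hq₀0 P.1 = ⊥
    rw [hP, QPlane.toPol_bot]
  · rw [Set.image_singleton, QPlane.symb_x]
  · exact Ideal.mul_mem_right _ _ (Ideal.subset_span (by simp))
  · rw [Set.image_singleton, QPlane.symb_y]
  · exact Ideal.mul_mem_left _ _ (Ideal.subset_span (by simp))
  · rw [Set.image_pair, map_sub, QPlane.symb_x, QPlane.symb_y, QPlane.symb_scal]
  · exact Ideal.mul_mem_left _ _ (Ideal.subset_span (by simp))
  · rw [Set.image_pair, map_sub, QPlane.symb_x, QPlane.symb_y, QPlane.symb_scal]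
  · exact Ideal.mul_mem_right _ _ (Ideal.subset_span (by simp))
end

section
/- Let K be the set of all λ ∈ ℂ∖{0,1} such that e_k(λ) ≠ 0 for all 1 ≤ k ≤ r and the multiplicative subgroup of ℂ^× generated by e_1(λ),…,e_r(λ) is free abelian with basis e_1(λ),…,e_r(λ). Then K is an infinite subset of ℂ∖{0,1} and q ∈ K. -/
/-!
For a nonzero exponent vector `a`, splitting `a` into its positive and negative parts turns the
relation `∏ k, e_k(l) ^ a k = 1` into the vanishing at `l` of the polynomial
`∏ k, e_k ^ (a k)⁺ - ∏ k, e_k ^ (a k)⁻`. This polynomial does not vanish at `q₀`, because the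
`e_k(q₀) = η k` are multiplicatively independent; so it is nonzero and has finitely many roots.
There are countably many exponent vectors, so all but countably many `l` lie in `K`, and `K` is
infinite because `ℂ` is uncountable.
-/

open Polynomial in
/-- The polynomial whose vanishing at `l` expresses the relation `∏ k, e_k(l) ^ a k = 1`,
as long as no `e_k(l)` is zero (see `prod_zpow_eq_one_iff`). -/
noncomputable def relationPoly {r : ℕ} (e : Fin r → ℂ[X]) (a : Fin r → ℤ) : ℂ[X] :=
  ∏ k, e k ^ (a k).toNat - ∏ k, e k ^ (-a k).toNat

lemma prod_zpow_eq_one_iff {r : ℕ} (e : Fin r → Polynomial ℂ) (a : Fin r → ℤ) (l : ℂ)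
    (hl : ∀ k, (e k).eval l ≠ 0) :
    ∏ k, (e k).eval l ^ a k = 1 ↔ (relationPoly e a).eval l = 0 := by
  have hsplit : ∀ k, (e k).eval l ^ a k =
      (e k).eval l ^ (a k).toNat / (e k).eval l ^ (-a k).toNat := by
    intro k
    rw [← zpow_natCast, ← zpow_natCast, ← zpow_sub₀ (hl k), Int.toNat_sub_toNat_neg]
  have hden : ∏ k, (e k).eval l ^ (-a k).toNat ≠ 0 :=
    Finset.prod_ne_zero_iff.mpr fun k _ => pow_ne_zero _ (hl k)
  simp only [hsplit, Finset.prod_div_distrib, div_eq_one_iff_eq hden, relationPoly,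
    Polynomial.eval_sub, Polynomial.eval_prod, Polynomial.eval_pow, sub_eq_zero]

/-- the set `K` of `λ ∈ ℂ∖{0,1}` such that `e_k(λ) ≠ 0` for all `k` and
`e_1(λ),…,e_r(λ)` form a basis of a free abelian subgroup of `ℂ^×` is an infinite
subset of `ℂ∖{0,1}`, and `q ∈ K`. -/
theorem stmt_6 (r : ℕ)
    -- a basis η of the torsion-free group G(Q,Λ)
    (η : Fin r → ℂ) (hη0 : ∀ k, η k ≠ 0)
    (hfree : ∀ a : Fin r → ℤ, ∏ k, η k ^ a k = 1 → a = 0)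
    -- ℚ-linearly independent μ's and a non-root of unity q
    (μ : Fin r → ℂ) (hμ : LinearIndependent ℚ μ)
    (q₀ : ℂ) (hq₀0 : q₀ ≠ 0) (hq₀1 : q₀ ≠ 1) (hq₀ru : ∀ m : ℕ, 0 < m → q₀ ^ m ≠ 1)
    -- the interpolation polynomials e_k
    (e : Fin r → Polynomial ℂ) (hdeg : ∀ k, (e k).natDegree ≤ 2)
    (heq : ∀ k, (e k).eval q₀ = η k) (he1 : ∀ k, (e k).eval 1 = 1)
    (he'1 : ∀ k, (Polynomial.derivative (e k)).eval 1 = μ k) :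
    Set.Infinite {l : ℂ | l ≠ 0 ∧ l ≠ 1 ∧ (∀ k, (e k).eval l ≠ 0) ∧
        ∀ a : Fin r → ℤ, ∏ k, (e k).eval l ^ a k = 1 → a = 0} ∧
    q₀ ∈ {l : ℂ | l ≠ 0 ∧ l ≠ 1 ∧ (∀ k, (e k).eval l ≠ 0) ∧
        ∀ a : Fin r → ℤ, ∏ k, (e k).eval l ^ a k = 1 → a = 0} := by
  have hq0 : ∀ k, (e k).eval q₀ ≠ 0 := fun k => by rw [heq]; exact hη0 k
  have hqfree : ∀ a : Fin r → ℤ, ∏ k, (e k).eval q₀ ^ a k = 1 → a = 0 := by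
    simpa only [heq] using hfree
  refine ⟨fun hfin => ?_, hq₀0, hq₀1, hq0, hqfree⟩
  have hroots : ∀ p : Polynomial ℂ, p.eval q₀ ≠ 0 → {l : ℂ | p.eval l = 0}.Countable := by
    intro p hp
    have hp0 : p ≠ 0 := by
      rintro rfl
      simp at hp
    exact (Polynomial.finite_setOfPred_isRoot hp0).countable
  have hzero : (⋃ k, {l : ℂ | (e k).eval l = 0}).Countable :=
    Set.countable_iUnion fun k => hroots _ (hq0 k)
  have hrel : (⋃ a ∈ {a : Fin r → ℤ | a ≠ 0}, {l : ℂ | (relationPoly e a).eval l = 0}).Countable :=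
    (Set.to_countable _).biUnion fun a ha =>
      hroots _ fun h => ha (hqfree a ((prod_zpow_eq_one_iff e a q₀ hq0).mpr h))
  refine not_countable_complex (((((Set.toFinite {0, 1}).countable.union hzero).union hrel).union
    hfin.countable).mono fun l _ => ?_)
  by_contra hl
  simp only [Set.mem_union, Set.mem_insert_iff, Set.mem_singleton_iff, Set.mem_iUnion,
    Set.mem_ofPred_eq, not_or, not_exists] at hl
  obtain ⟨⟨⟨⟨hl0, hl1⟩, hle⟩, hla⟩, hlK⟩ := hl
  refine hlK ⟨hl0, hl1, hle, fun a ha => ?_⟩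
  by_contra hane
  exact hla a hane ((prod_zpow_eq_one_iff e a l hle).mp ha)
end

section
/- The element t − 1 is a nonzero, nonunit, non-zero-divisor of A, the quotient A/(t−1)A is a commutative ℂ-algebra isomorphic to the polynomial ring ℂ[y_1,x_1,…,y_n,x_n], and the induced bracket {ā, b̄} := image of (t−1)⁻¹(ab − ba) makes A/(t−1)A a Poisson algebra whose bracket on generators is: {y_j,y_i} = λ̃_ji'(1) y_i y_j, {y_j,x_i} = λ̃_ij'(1) x_i y_j, {x_j,y_i} = (q̃_i'(1) + λ̃_ij'(1)) y_i x_j, {x_j,x_i} = −(q̃_i'(1) + λ̃_ij'(1)) x_i x_j for 1 ≤ i < j ≤ n, and {x_i,y_i} = q̃_i'(1)(1 + Σ_{k=1}^{i} y_k x_k) for 1 ≤ i ≤ n; that is, A/(t−1)A is the multi-parameter Poisson Weyl algebra A_1. -/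
/-!
Write `τ = t - 1`. Reordering shows that the standard monomials `y^r x^s` span `A` over `F`
(`mem_stdSpan`). They are linearly independent: `A` acts on functions `ℤⁿ → ℂ(t)` by weighted
shifts, a function `f` standing for `∑ f(p) y^p`, with `y_j` acting as left multiplication and `x_j`
as a `q̃_j`-difference operator (`genOp_rel`). Since no `q̃_i` is a root of unity, `x^s` kills `y^p`
exactly when `s ≤ p` fails, for `p` in `ℕⁿ`, and applying a relation to `y^{s₀}` with `s₀` minimal
separates its terms (`stdMon_indep`). So `A` is free over the domain `F`, and the central element
`τ` is regular.

At `t = 1` every `q̃_i` and `λ̃_ij` becomes `1`, so all defining relations hold in the commutative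
ring `ℂ[y_1, x_1, …, y_n, x_n]` and `A` maps onto it. Distinct standard monomials go to distinct
monomials, so an element of the kernel has all its coefficients in the kernel `τF` of evaluation,
and the kernel is `τA` (`reduction_ker`). For a central regular `τ` with commutative quotient
`A/τA`, the bracket `τ⁻¹(ab - ba)` is well defined and Poisson (`exists_poissonBr`).

On generators, each commutator is `c - 1` times a monomial, up to units equal to `1` at `t = 1`,
for a product `c` of parameters; its image is governed by the value of `(c - 1)/τ` at `t = 1`, which
is the derivative of `c` there and is additive in the exponents of the `e_k` because `e_k(1) = 1`
(`derivSubgroup`, `deriv_prod_zpow`). The bracket `{x_i, y_i}` comes in the same way from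
`x_i y_i - y_i x_i = (q̃_i - 1)(1 + ∑_{k ≤ i} y_k x_k)`. All of this is carried out in `core` over an
abstract coefficient ring, which `stmt_10` applies to `F ⊆ ℂ(t)`.
-/

set_option synthInstance.maxHeartbeats 1000000

/-- The defining relations of the `F`-algebra `A = A_n^{Q̃,Λ̃}` over a commutative
coefficient ring `F`, with coefficients `qt i = q̃_i`, `qti i = q̃_i⁻¹`,
`lt i j = λ̃_ij`, `lti i j = λ̃_ij⁻¹`; generators `Sum.inl i = y_i`, `Sum.inr i = x_i`. -/
inductive AFRel (F : Type) [CommRing F] (n : ℕ) (qt qti : Fin n → F)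
    (lt lti : Fin n → Fin n → F) :
    FreeAlgebra F (Fin n ⊕ Fin n) → FreeAlgebra F (Fin n ⊕ Fin n) → Prop
  | yy (i j : Fin n) (h : i < j) : AFRel F n qt qti lt lti
      (FreeAlgebra.ι F (Sum.inl j) * FreeAlgebra.ι F (Sum.inl i))
      (lt j i • (FreeAlgebra.ι F (Sum.inl i) * FreeAlgebra.ι F (Sum.inl j)))
  | yx (i j : Fin n) (h : i < j) : AFRel F n qt qti lt lti
      (FreeAlgebra.ι F (Sum.inl j) * FreeAlgebra.ι F (Sum.inr i))
      (lt i j • (FreeAlgebra.ι F (Sum.inr i) * FreeAlgebra.ι F (Sum.inl j)))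
  | xy (i j : Fin n) (h : i < j) : AFRel F n qt qti lt lti
      (FreeAlgebra.ι F (Sum.inr j) * FreeAlgebra.ι F (Sum.inl i))
      ((qt i * lt i j) • (FreeAlgebra.ι F (Sum.inl i) * FreeAlgebra.ι F (Sum.inr j)))
  | xx (i j : Fin n) (h : i < j) : AFRel F n qt qti lt lti
      (FreeAlgebra.ι F (Sum.inr j) * FreeAlgebra.ι F (Sum.inr i))
      ((qti i * lti i j) • (FreeAlgebra.ι F (Sum.inr i) * FreeAlgebra.ι F (Sum.inr j)))
  | weyl (i : Fin n) : AFRel F n qt qti lt lti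
      (FreeAlgebra.ι F (Sum.inr i) * FreeAlgebra.ι F (Sum.inl i)
        - qt i • (FreeAlgebra.ι F (Sum.inl i) * FreeAlgebra.ι F (Sum.inr i)))
      ((qt i - 1) • (1 + ∑ k ∈ Finset.Iio i,
        FreeAlgebra.ι F (Sum.inl k) * FreeAlgebra.ι F (Sum.inr k)))

/-- The generator `y_i` of `A`. -/
noncomputable def Yf (F : Type) [CommRing F] (n : ℕ) (qt qti : Fin n → F)
    (lt lti : Fin n → Fin n → F) (i : Fin n) : RingQuot (AFRel F n qt qti lt lti) :=
  RingQuot.mkRingHom (AFRel F n qt qti lt lti) (FreeAlgebra.ι F (Sum.inl i))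

/-- The generator `x_i` of `A`. -/
noncomputable def Xf (F : Type) [CommRing F] (n : ℕ) (qt qti : Fin n → F)
    (lt lti : Fin n → Fin n → F) (i : Fin n) : RingQuot (AFRel F n qt qti lt lti) :=
  RingQuot.mkRingHom (AFRel F n qt qti lt lti) (FreeAlgebra.ι F (Sum.inr i))

/-- The standard monomial `y_1^{r_1} x_1^{s_1} ⋯ y_n^{r_n} x_n^{s_n}` in `A`. -/
noncomputable def monomF (F : Type) [CommRing F] (n : ℕ) (qt qti : Fin n → F)
    (lt lti : Fin n → Fin n → F) (p : (Fin n → ℕ) × (Fin n → ℕ)) :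
    RingQuot (AFRel F n qt qti lt lti) :=
  (List.ofFn fun i =>
    Yf F n qt qti lt lti i ^ p.1 i * Xf F n qt qti lt lti i ^ p.2 i).prod

/-- The generator `y_i` of the multi-parameter Poisson Weyl algebra
`A₁ = ℂ[y_1, x_1, …, y_n, x_n]`. -/
noncomputable def yP (n : ℕ) (i : Fin n) : MvPolynomial (Fin n ⊕ Fin n) ℂ :=
  MvPolynomial.X (Sum.inl i)

/-- The generator `x_i` of the multi-parameter Poisson Weyl algebra. -/
noncomputable def xP (n : ℕ) (i : Fin n) : MvPolynomial (Fin n ⊕ Fin n) ℂ :=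
  MvPolynomial.X (Sum.inr i)

/-- The element `z_m = 1 + ∑_{k=1}^m y_k x_k` of the Poisson Weyl algebra
(1-indexed: the sum is over generators with (0-indexed) index `< m`). -/
noncomputable def zP (n : ℕ) (m : ℕ) : MvPolynomial (Fin n ⊕ Fin n) ℂ :=
  1 + ∑ k ∈ Finset.univ.filter (fun k : Fin n => (k : ℕ) < m), yP n k * xP n k

/-- The relation identifying `t - 1` with `0`, i.e. the quotient by the two-sided
ideal generated by `t - 1`. -/
def relT {R : Type} [Ring R] (t : R) : R → R → Prop := fun a b => a = t - 1 ∧ b = 0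


/-! ### Reordering in the algebra: the standard monomials span -/

section Spanning

variable {F : Type} [CommRing F] {n : ℕ} {qt qti : Fin n → F} {lt lti : Fin n → Fin n → F}

theorem Yf_eq (i : Fin n) : Yf F n qt qti lt lti i =
    RingQuot.mkAlgHom F (AFRel F n qt qti lt lti) (FreeAlgebra.ι F (Sum.inl i)) := by
  rw [Yf, ← RingQuot.mkAlgHom_coe F]; rfl

theorem Xf_eq (i : Fin n) : Xf F n qt qti lt lti i =
    RingQuot.mkAlgHom F (AFRel F n qt qti lt lti) (FreeAlgebra.ι F (Sum.inr i)) := by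
  rw [Xf, ← RingQuot.mkAlgHom_coe F]; rfl

theorem mk_algebraMap (c : F) : RingQuot.mkRingHom (AFRel F n qt qti lt lti)
    (algebraMap F (FreeAlgebra F (Fin n ⊕ Fin n)) c) =
    algebraMap F (RingQuot (AFRel F n qt qti lt lti)) c := by
  rw [← RingQuot.mkAlgHom_coe F]
  exact (RingQuot.mkAlgHom F (AFRel F n qt qti lt lti)).commutes c

theorem rel_yy {i j : Fin n} (h : i < j) :
    Yf F n qt qti lt lti j * Yf F n qt qti lt lti i =
      lt j i • (Yf F n qt qti lt lti i * Yf F n qt qti lt lti j) := by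
  have := RingQuot.mkAlgHom_rel F (AFRel.yy (qt := qt) (qti := qti) (lt := lt) (lti := lti) i j h)
  simpa only [map_mul, map_smul, ← Yf_eq, ← Xf_eq] using this

theorem rel_yx {i j : Fin n} (h : i < j) :
    Yf F n qt qti lt lti j * Xf F n qt qti lt lti i =
      lt i j • (Xf F n qt qti lt lti i * Yf F n qt qti lt lti j) := by
  have := RingQuot.mkAlgHom_rel F (AFRel.yx (qt := qt) (qti := qti) (lt := lt) (lti := lti) i j h)
  simpa only [map_mul, map_smul, ← Yf_eq, ← Xf_eq] using this

theorem rel_xy {i j : Fin n} (h : i < j) :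
    Xf F n qt qti lt lti j * Yf F n qt qti lt lti i =
      (qt i * lt i j) • (Yf F n qt qti lt lti i * Xf F n qt qti lt lti j) := by
  have := RingQuot.mkAlgHom_rel F (AFRel.xy (qt := qt) (qti := qti) (lt := lt) (lti := lti) i j h)
  simpa only [map_mul, map_smul, ← Yf_eq, ← Xf_eq] using this

theorem rel_xx {i j : Fin n} (h : i < j) :
    Xf F n qt qti lt lti j * Xf F n qt qti lt lti i =
      (qti i * lti i j) • (Xf F n qt qti lt lti i * Xf F n qt qti lt lti j) := by
  have := RingQuot.mkAlgHom_rel F (AFRel.xx (qt := qt) (qti := qti) (lt := lt) (lti := lti) i j h)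
  simpa only [map_mul, map_smul, ← Yf_eq, ← Xf_eq] using this

theorem rel_weyl (i : Fin n) :
    Xf F n qt qti lt lti i * Yf F n qt qti lt lti i
        - qt i • (Yf F n qt qti lt lti i * Xf F n qt qti lt lti i) =
      (qt i - 1) • (1 + ∑ k ∈ Finset.Iio i, Yf F n qt qti lt lti k * Xf F n qt qti lt lti k) := by
  have := RingQuot.mkAlgHom_rel F (AFRel.weyl (qt := qt) (qti := qti) (lt := lt) (lti := lti) i)
  simpa only [map_sub, map_add, map_one, map_sum, map_mul, map_smul, ← Yf_eq, ← Xf_eq] using this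

theorem swap_yy (hlti : ∀ i j, lt i j * lti i j = 1) (i j : Fin n) :
    ∃ c : F, Yf F n qt qti lt lti i * Yf F n qt qti lt lti j =
      c • (Yf F n qt qti lt lti j * Yf F n qt qti lt lti i) := by
  rcases lt_trichotomy i j with h | rfl | h
  · exact ⟨lti j i, by rw [rel_yy h, smul_smul, mul_comm, hlti, one_smul]⟩
  · exact ⟨1, by rw [one_smul]⟩
  · exact ⟨_, rel_yy h⟩

theorem swap_xx (hqti : ∀ i, qt i * qti i = 1) (hlti : ∀ i j, lt i j * lti i j = 1)
    (i j : Fin n) :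
    ∃ c : F, Xf F n qt qti lt lti i * Xf F n qt qti lt lti j =
      c • (Xf F n qt qti lt lti j * Xf F n qt qti lt lti i) := by
  rcases lt_trichotomy i j with h | rfl | h
  · refine ⟨qt i * lt i j, ?_⟩
    rw [rel_xx h, smul_smul, mul_mul_mul_comm, hqti, hlti, one_mul, one_smul]
  · exact ⟨1, by rw [one_smul]⟩
  · exact ⟨_, rel_xx h⟩

theorem swap_xy (hlti : ∀ i j, lt i j * lti i j = 1) {i j : Fin n} (hij : i ≠ j) :
    ∃ c : F, Xf F n qt qti lt lti j * Yf F n qt qti lt lti i =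
      c • (Yf F n qt qti lt lti i * Xf F n qt qti lt lti j) := by
  rcases lt_or_gt_of_ne hij with h | h
  · exact ⟨_, rel_xy h⟩
  · exact ⟨lti j i, by rw [rel_yx h, smul_smul, mul_comm, hlti, one_smul]⟩

/-- Permuting the factors of a word in quasi-commuting elements only changes it by a scalar. -/
theorem perm_smul {A : Type} [Ring A] [Algebra F A] {v : Fin n → A}
    (hv : ∀ i j, ∃ c : F, v i * v j = c • (v j * v i)) {l l' : List (Fin n)} (h : l.Perm l') :
    ∃ c : F, (l.map v).prod = c • (l'.map v).prod := by
  induction h with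
  | nil => exact ⟨1, by simp⟩
  | cons x _ ih =>
    obtain ⟨c, hc⟩ := ih
    exact ⟨c, by simp [hc]⟩
  | swap x y l =>
    obtain ⟨c, hc⟩ := hv y x
    refine ⟨c, ?_⟩
    simp only [List.map_cons, List.prod_cons]
    rw [← mul_assoc, hc, smul_mul_assoc, mul_assoc]
  | trans _ _ ih ih' =>
    obtain ⟨c, hc⟩ := ih
    obtain ⟨c', hc'⟩ := ih'
    exact ⟨c * c', by rw [hc, hc', smul_smul]⟩

variable (F n qt qti lt lti) in
/-- The product in `A` of the word `y_{i_1} ⋯ y_{i_a} x_{j_1} ⋯ x_{j_b}`. -/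
noncomputable def wordYX (l l' : List (Fin n)) : RingQuot (AFRel F n qt qti lt lti) :=
  (l.map (Yf F n qt qti lt lti)).prod * (l'.map (Xf F n qt qti lt lti)).prod

variable (F n qt qti lt lti) in
/-- The standard monomial `y^r x^s`. Exponent vectors are encoded as multisets of indices, and the
factors come in the arbitrary order chosen by `Multiset.toList`; other orders differ by a
scalar. -/
noncomputable def stdMon (p : Multiset (Fin n) × Multiset (Fin n)) :
    RingQuot (AFRel F n qt qti lt lti) :=
  wordYX F n qt qti lt lti p.1.toList p.2.toList

variable (F n qt qti lt lti) in
/-- The `F`-span of the standard monomials. -/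
noncomputable def stdSpan : Submodule F (RingQuot (AFRel F n qt qti lt lti)) :=
  Submodule.span F (Set.range (stdMon F n qt qti lt lti))

theorem wordYX_mem (hqti : ∀ i, qt i * qti i = 1) (hlti : ∀ i j, lt i j * lti i j = 1)
    (l l' : List (Fin n)) : wordYX F n qt qti lt lti l l' ∈ stdSpan F n qt qti lt lti := by
  have h1 : l.Perm (l : Multiset (Fin n)).toList :=
    Multiset.coe_eq_coe.1 (Multiset.coe_toList _).symm
  have h2 : l'.Perm (l' : Multiset (Fin n)).toList :=
    Multiset.coe_eq_coe.1 (Multiset.coe_toList _).symm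
  obtain ⟨c, hc⟩ := perm_smul (F := F) (swap_yy (qt := qt) (qti := qti) hlti) h1
  obtain ⟨c', hc'⟩ := perm_smul (F := F) (swap_xx hqti hlti) h2
  rw [wordYX, hc, hc', smul_mul_smul_comm]
  exact Submodule.smul_mem _ _ (Submodule.subset_span ⟨(↑l, ↑l'), rfl⟩)

theorem Yf_mul_mem (hqti : ∀ i, qt i * qti i = 1) (hlti : ∀ i j, lt i j * lti i j = 1)
    (i : Fin n) {a : RingQuot (AFRel F n qt qti lt lti)} (ha : a ∈ stdSpan F n qt qti lt lti) :
    Yf F n qt qti lt lti i * a ∈ stdSpan F n qt qti lt lti := by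
  induction ha using Submodule.span_induction with
  | mem x h =>
    obtain ⟨p, rfl⟩ := h
    have := wordYX_mem hqti hlti (i :: p.1.toList) p.2.toList
    simpa [stdMon, wordYX, mul_assoc] using this
  | zero => simp
  | add x y _ _ hx hy => rw [mul_add]; exact Submodule.add_mem _ hx hy
  | smul c x _ hx => rw [mul_smul_comm]; exact Submodule.smul_mem _ _ hx

theorem mul_wordX_mem (hqti : ∀ i, qt i * qti i = 1) (hlti : ∀ i j, lt i j * lti i j = 1)
    (l : List (Fin n)) {a : RingQuot (AFRel F n qt qti lt lti)}
    (ha : a ∈ stdSpan F n qt qti lt lti) :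
    a * (l.map (Xf F n qt qti lt lti)).prod ∈ stdSpan F n qt qti lt lti := by
  induction ha using Submodule.span_induction with
  | mem x h =>
    obtain ⟨p, rfl⟩ := h
    have := wordYX_mem hqti hlti p.1.toList (p.2.toList ++ l)
    simpa [stdMon, wordYX, mul_assoc] using this
  | zero => simp
  | add x y _ _ hx hy => rw [add_mul]; exact Submodule.add_mem _ hx hy
  | smul c x _ hx => rw [smul_mul_assoc]; exact Submodule.smul_mem _ _ hx

/-- The induction is over all `j` at once: moving `x_j` past `y_j` creates the terms
`y_k x_k` with `k < j`, whose `x_k` then has to pass the shorter word. -/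
theorem Xf_mul_wordY_mem (hqti : ∀ i, qt i * qti i = 1) (hlti : ∀ i j, lt i j * lti i j = 1)
    (l : List (Fin n)) : ∀ j : Fin n,
    Xf F n qt qti lt lti j * (l.map (Yf F n qt qti lt lti)).prod ∈
      stdSpan F n qt qti lt lti := by
  induction l with
  | nil =>
    intro j
    simpa [wordYX] using wordYX_mem (qt := qt) hqti hlti [] [j]
  | cons i l ih =>
    intro j
    rw [List.map_cons, List.prod_cons, ← mul_assoc]
    by_cases hij : i = j
    · subst hij
      have h := rel_weyl (F := F) (qt := qt) (qti := qti) (lt := lt) (lti := lti) i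
      rw [sub_eq_iff_eq_add] at h
      rw [h, add_mul, smul_mul_assoc, smul_mul_assoc, add_mul, one_mul, Finset.sum_mul, mul_assoc]
      refine Submodule.add_mem _ (Submodule.smul_mem _ _ (Submodule.add_mem _ ?_
        (Submodule.sum_mem _ fun k _ => ?_))) (Submodule.smul_mem _ _ ?_)
      · simpa [wordYX] using wordYX_mem (qt := qt) hqti hlti l []
      · rw [mul_assoc]
        exact Yf_mul_mem hqti hlti k (ih k)
      · exact Yf_mul_mem hqti hlti i (ih i)
    · obtain ⟨c, hc⟩ := swap_xy (F := F) (qt := qt) (qti := qti) hlti hij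
      rw [hc, smul_mul_assoc, mul_assoc]
      exact Submodule.smul_mem _ _ (Yf_mul_mem hqti hlti i (ih j))

theorem Xf_mul_mem (hqti : ∀ i, qt i * qti i = 1) (hlti : ∀ i j, lt i j * lti i j = 1)
    (j : Fin n) {a : RingQuot (AFRel F n qt qti lt lti)} (ha : a ∈ stdSpan F n qt qti lt lti) :
    Xf F n qt qti lt lti j * a ∈ stdSpan F n qt qti lt lti := by
  induction ha using Submodule.span_induction with
  | mem x h =>
    obtain ⟨p, rfl⟩ := h
    rw [stdMon, wordYX, ← mul_assoc]
    exact mul_wordX_mem hqti hlti _ (Xf_mul_wordY_mem hqti hlti _ j)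
  | zero => simp
  | add x y _ _ hx hy => rw [mul_add]; exact Submodule.add_mem _ hx hy
  | smul c x _ hx => rw [mul_smul_comm]; exact Submodule.smul_mem _ _ hx

theorem mem_stdSpan (hqti : ∀ i, qt i * qti i = 1) (hlti : ∀ i j, lt i j * lti i j = 1)
    (a : RingQuot (AFRel F n qt qti lt lti)) : a ∈ stdSpan F n qt qti lt lti := by
  obtain ⟨u, rfl⟩ := RingQuot.mkAlgHom_surjective F (AFRel F n qt qti lt lti) a
  suffices h : ∀ b ∈ stdSpan F n qt qti lt lti,
      RingQuot.mkAlgHom F (AFRel F n qt qti lt lti) u * b ∈ stdSpan F n qt qti lt lti by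
    simpa using h 1 (by simpa [wordYX] using wordYX_mem (qt := qt) hqti hlti [] [])
  induction u using FreeAlgebra.induction with
  | grade0 c =>
    intro b hb
    rw [AlgHom.commutes, ← Algebra.smul_def]
    exact Submodule.smul_mem _ _ hb
  | grade1 x =>
    intro b hb
    cases x with
    | inl i => rw [← Yf_eq]; exact Yf_mul_mem hqti hlti i hb
    | inr i => rw [← Xf_eq]; exact Xf_mul_mem hqti hlti i hb
  | mul u v hu hv =>
    intro b hb
    rw [map_mul, mul_assoc]
    exact hu _ (hv _ hb)
  | add u v hu hv =>
    intro b hb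
    rw [map_add, add_mul]
    exact Submodule.add_mem _ (hu _ hb) (hv _ hb)

theorem exists_stdMon_sum (hqti : ∀ i, qt i * qti i = 1) (hlti : ∀ i j, lt i j * lti i j = 1)
    (a : RingQuot (AFRel F n qt qti lt lti)) :
    ∃ c : (Multiset (Fin n) × Multiset (Fin n)) →₀ F,
      (c.sum fun p u => u • stdMon F n qt qti lt lti p) = a :=
  Finsupp.mem_span_range_iff_exists_finsupp.1 (mem_stdSpan hqti hlti a)

end Spanning


/-! ### Weighted shifts on `ℤⁿ` and freeness -/

section Representation

variable {F : Type} [CommRing F] {n : ℕ} {K : Type} [Field K] [Algebra F K]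

variable (F) in
/-- The weighted shift `f ↦ (p ↦ w p * f (p + d))` on functions `ℤⁿ → K`. -/
def shiftOp (w : (Fin n → ℤ) → K) (d : Fin n → ℤ) : Module.End F ((Fin n → ℤ) → K) where
  toFun f p := w p * f (p + d)
  map_add' f g := by ext p; simp [mul_add]
  map_smul' c f := by ext p; simp

theorem shiftOp_mul (w w' : (Fin n → ℤ) → K) (d d' : Fin n → ℤ) :
    shiftOp F w d * shiftOp F w' d' = shiftOp F (fun p => w p * w' (p + d)) (d + d') := by
  ext f p
  simp [shiftOp, mul_assoc, add_assoc]

theorem shiftOp_smul (c : F) (w : (Fin n → ℤ) → K) (d : Fin n → ℤ) :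
    c • shiftOp F w d = shiftOp F (fun p => algebraMap F K c * w p) d := by
  ext f p
  simp [shiftOp, Algebra.smul_def, mul_assoc]

/-- The standard basis vector `e_i` of `ℤⁿ`. -/
def ee (i : Fin n) : Fin n → ℤ := Pi.single i 1

/-- The character `p ↦ ∏ u_i ^ p_i` of `ℤⁿ`. -/
def chi (u : Fin n → K) (p : Fin n → ℤ) : K := ∏ i, u i ^ p i

theorem chi_add {u : Fin n → K} (hu : ∀ i, u i ≠ 0) (p p' : Fin n → ℤ) :
    chi u (p + p') = chi u p * chi u p' := by
  simp [chi, zpow_add₀ (hu _), Finset.prod_mul_distrib]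

theorem chi_ee (u : Fin n → K) (i : Fin n) : chi u (ee i) = u i := by
  rw [chi, Finset.prod_eq_single i] <;> simp +contextual [ee]

theorem chi_neg (u : Fin n → K) (p : Fin n → ℤ) :
    chi u (-p) = (chi u p)⁻¹ := by
  simp [chi]

theorem chi_ne_zero {u : Fin n → K} (hu : ∀ i, u i ≠ 0) (p : Fin n → ℤ) : chi u p ≠ 0 :=
  Finset.prod_ne_zero_iff.2 fun i _ => zpow_ne_zero _ (hu i)

/-- The values on basis vectors of the character `p ↦ ∏_{i<j} λ_ji^{p_i}`, the coefficient in
`y_j y^p = ∏_{i<j} λ_ji^{p_i} y^{p + e_j}`. -/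
def uY (L : Fin n → Fin n → K) (j i : Fin n) : K := if i < j then L j i else 1

/-- The values on basis vectors of the character `p ↦ ∏_{i<j} (q_i λ_ij)^{p_i}` that `x_j` picks
up when it passes the `y_i` with `i < j`. -/
def uX (Q : Fin n → K) (L : Fin n → Fin n → K) (j i : Fin n) : K :=
  if i < j then Q i * L i j else 1

/-- The weight of `x_j`: the character of `uX` times `q_j^{p_j + 1} - 1`. -/
def wX (Q : Fin n → K) (L : Fin n → Fin n → K) (j : Fin n) (p : Fin n → ℤ) : K :=
  chi (uX Q L j) p * (Q j ^ (p j + 1) - 1)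

variable (F) in
/-- The generators acting on `ℤⁿ → K`, a function `f` standing for `∑ f(p) y^p`: `y_j` multiplies
by `y_j` from the left and `x_j` is a `q_j`-difference operator. -/
def genOp (Q : Fin n → K) (L : Fin n → Fin n → K) :
    Fin n ⊕ Fin n → Module.End F ((Fin n → ℤ) → K)
  | Sum.inl j => shiftOp F (chi (uY L j)) (-ee j)
  | Sum.inr j => shiftOp F (wX Q L j) (ee j)

variable {Q : Fin n → K} {L : Fin n → Fin n → K}

theorem uY_ne (hL : ∀ i j, L i j * L j i = 1) (j i : Fin n) : uY L j i ≠ 0 := by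
  unfold uY
  split
  · exact left_ne_zero_of_mul_eq_one (hL j i)
  · exact one_ne_zero

theorem uX_ne (hQ : ∀ i, Q i ≠ 0) (hL : ∀ i j, L i j * L j i = 1) (j i : Fin n) :
    uX Q L j i ≠ 0 := by
  unfold uX
  split
  · exact mul_ne_zero (hQ i) (left_ne_zero_of_mul_eq_one (hL i j))
  · exact one_ne_zero

theorem chi_mul_chi (hL : ∀ i j, L i j * L j i = 1) (k : Fin n) (p : Fin n → ℤ) :
    chi (uY L k) p * chi (uX Q L k) p = ∏ i ∈ Finset.Iio k, Q i ^ p i := by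
  have : ∀ i, uY L k i ^ p i * uX Q L k i ^ p i = if i < k then Q i ^ p i else 1 := by
    intro i
    unfold uY uX
    split
    · rw [← mul_zpow, mul_left_comm, hL, mul_one]
    · simp
  rw [chi, chi, ← Finset.prod_mul_distrib, Finset.prod_congr rfl fun i _ => this i,
    ← Finset.prod_filter]
  congr 1
  ext i
  simp

/-- The telescoping identity `1 + ∑_{k<j} (∏_{i<k} a_i) (a_k - 1) = ∏_{i<j} a_i`, by which
`z_{j-1}` acts diagonally with eigenvalue `∏_{i<j} q_i^{p_i}`. -/
theorem telescope (a : Fin n → K) (j : Fin n) :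
    1 + ∑ k ∈ Finset.Iio j, (∏ i ∈ Finset.Iio k, a i) * (a k - 1) =
      ∏ i ∈ Finset.Iio j, a i := by
  have h := Finset.prod_add_ordered (Finset.Iio j) (fun _ => (1 : K)) (fun i => a i - 1)
  simp only [add_sub_cancel, Finset.prod_const_one, mul_one] at h
  rw [h]
  congr 1
  refine Finset.sum_congr rfl fun k hk => ?_
  rw [mul_comm]
  congr 2
  ext i
  simp only [Finset.mem_Iio, Finset.mem_filter] at hk ⊢
  exact ⟨fun hi => ⟨hi.trans hk, hi⟩, fun hi => hi.2⟩

theorem ee_self (i : Fin n) : ee i i = 1 := by simp [ee]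

theorem ee_ne {i j : Fin n} (h : j ≠ i) : ee i j = 0 := by simp [ee, h]

/-- `y_k x_k` acts diagonally, with eigenvalue `∏_{i<k} q_i^{p_i} (q_k^{p_k} - 1)`. -/
theorem genOp_yx_diag (hQ : ∀ i, Q i ≠ 0) (hL : ∀ i j, L i j * L j i = 1) (k : Fin n) :
    genOp F Q L (Sum.inl k) * genOp F Q L (Sum.inr k) =
      shiftOp F (fun p => (∏ i ∈ Finset.Iio k, Q i ^ p i) * (Q k ^ p k - 1)) 0 := by
  have hX := chi_add (uX_ne hQ hL k)
  rw [genOp, genOp, shiftOp_mul, neg_add_cancel]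
  congr 1
  ext p
  have h1 : uX Q L k k = 1 := by simp [uX]
  rw [wX, hX, chi_neg, chi_ee, h1, ← chi_mul_chi hL]
  simp [ee_self, mul_assoc]

theorem genOp_rel {qt qti : Fin n → F} {lt lti : Fin n → Fin n → F}
    (hqti : ∀ i, qt i * qti i = 1) (hlti : ∀ i j, lt i j * lti i j = 1)
    (hlt : ∀ i j, lt i j * lt j i = 1) {u v : FreeAlgebra F (Fin n ⊕ Fin n)}
    (h : AFRel F n qt qti lt lti u v) :
    FreeAlgebra.lift F (genOp F (fun i => algebraMap F K (qt i))
        (fun i j => algebraMap F K (lt i j))) u =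
      FreeAlgebra.lift F (genOp F (fun i => algebraMap F K (qt i))
        (fun i j => algebraMap F K (lt i j))) v := by
  set Q : Fin n → K := fun i => algebraMap F K (qt i) with hQdef
  set L : Fin n → Fin n → K := fun i j => algebraMap F K (lt i j) with hLdef
  have hL : ∀ i j, L i j * L j i = 1 := fun i j => by
    simp only [L, ← map_mul, hlt, map_one]
  have hQ : ∀ i, Q i ≠ 0 := fun i => by
    refine left_ne_zero_of_mul_eq_one (b := algebraMap F K (qti i)) ?_
    simp only [Q, ← map_mul, hqti, map_one]
  have hQi : ∀ i, algebraMap F K (qti i) = (Q i)⁻¹ := fun i => by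
    refine eq_inv_of_mul_eq_one_right ?_
    simp only [Q, ← map_mul, hqti, map_one]
  have hLi : ∀ i j, algebraMap F K (lti i j) = (L i j)⁻¹ := fun i j => by
    refine eq_inv_of_mul_eq_one_right ?_
    simp only [L, ← map_mul, hlti, map_one]
  have hL0 : ∀ i j, L i j ≠ 0 := fun i j => left_ne_zero_of_mul_eq_one (hL i j)
  have hLinv : ∀ i j, L j i = (L i j)⁻¹ := fun i j => eq_inv_of_mul_eq_one_right (hL i j)
  have hY := fun j => chi_add (uY_ne hL j)
  have hX := fun j => chi_add (uX_ne hQ hL j)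
  cases h with
  | yy i j h =>
    simp only [map_mul, map_smul, FreeAlgebra.lift_ι_apply]
    simp only [genOp, shiftOp_mul, shiftOp_smul]
    rw [add_comm (-ee j)]
    congr 1
    ext p
    have h1 : uY L i j = 1 := by simp [uY, h.le]
    have h2 : uY L j i = L j i := by simp [uY, h]
    have := hL0 j i
    rw [hY, hY, chi_neg, chi_neg, chi_ee, chi_ee, h1, h2]
    change _ = L j i * _
    field_simp
  | yx i j h =>
    simp only [map_mul, map_smul, FreeAlgebra.lift_ι_apply]
    simp only [genOp, shiftOp_mul, shiftOp_smul]
    rw [add_comm (-ee j)]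
    congr 1
    ext p
    have h1 : uX Q L i j = 1 := by simp [uX, h.le]
    have h2 : uY L j i = L j i := by simp [uY, h]
    have := hL0 i j
    rw [wX, wX, hX, hY, chi_neg, chi_ee, chi_ee, h1, h2, hLinv i j]
    change _ = L i j * _
    simp only [Pi.add_apply, Pi.neg_apply, ee_ne h.ne, neg_zero, add_zero]
    field_simp
  | xy i j h =>
    simp only [map_mul, map_smul, FreeAlgebra.lift_ι_apply]
    simp only [genOp, shiftOp_mul, shiftOp_smul]
    rw [add_comm (ee j)]
    congr 1
    ext p
    have h1 : uX Q L j i = Q i * L i j := by simp [uX, h]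
    have h2 : uY L i j = 1 := by simp [uY, h.le]
    have := hL0 i j
    have := hQ i
    rw [wX, wX, hX, hY, chi_neg, chi_ee, chi_ee, h1, h2, map_mul]
    change _ = (Q i * L i j) * _
    simp only [Pi.add_apply, Pi.neg_apply, ee_ne h.ne', neg_zero, add_zero]
    field_simp
  | xx i j h =>
    simp only [map_mul, map_smul, FreeAlgebra.lift_ι_apply]
    simp only [genOp, shiftOp_mul, shiftOp_smul]
    rw [add_comm (ee j)]
    congr 1
    ext p
    have h1 : uX Q L j i = Q i * L i j := by simp [uX, h]
    have h2 : uX Q L i j = 1 := by simp [uX, h.le]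
    have := hL0 i j
    have := hQ i
    rw [wX, wX, wX, wX, hX, hX, chi_ee, chi_ee, h1, h2, map_mul, hQi, hLi]
    simp only [Pi.add_apply, ee_ne h.ne', ee_ne h.ne, add_zero]
    field_simp
  | weyl i =>
    simp only [map_mul, map_smul, map_add, map_sub, map_one, map_sum, FreeAlgebra.lift_ι_apply]
    simp only [genOp_yx_diag hQ hL]
    simp only [genOp, shiftOp_mul, add_neg_cancel]
    ext f p
    have h2 : uY L i i = 1 := by simp [uY]
    have ht := telescope (fun k => Q k ^ p k) i
    simp only [LinearMap.sub_apply, LinearMap.smul_apply, LinearMap.add_apply,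
      LinearMap.sum_apply, shiftOp, LinearMap.coe_mk, AddHom.coe_mk, Pi.sub_apply, Pi.smul_apply,
      Pi.add_apply, Finset.sum_apply, add_zero, Module.End.one_apply, ← Finset.sum_mul]
    simp only [Algebra.smul_def, map_sub, map_one]
    rw [← one_add_mul, ht, hY, chi_ee, h2, wX, zpow_add_one₀ (hQ i), ← chi_mul_chi hL]
    change _ - Q i * _ = (Q i - 1) * _
    ring

/-- The degree in `ℤⁿ` of a word. -/
def deg (l : List (Fin n)) : Fin n → ℤ := fun i => (l.count i : ℤ)

theorem deg_cons (j : Fin n) (l : List (Fin n)) : deg (j :: l) = deg l + ee j := by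
  ext i
  simp only [deg, List.count_cons, ee, Pi.add_apply, Pi.single_apply]
  by_cases h : i = j
  · simp [h]
  · simp [h, Ne.symm h]

theorem wordY_op (hL : ∀ i j, L i j * L j i = 1) (l : List (Fin n)) :
    ∃ u : (Fin n → ℤ) → K, (∀ p, u p ≠ 0) ∧
      (l.map fun j => genOp F Q L (Sum.inl j)).prod = shiftOp F u (-deg l) := by
  induction l with
  | nil =>
    refine ⟨fun _ => 1, fun _ => one_ne_zero, ?_⟩
    ext f p
    simp [shiftOp, show deg ([] : List (Fin n)) = 0 by ext; simp [deg]]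
  | cons j l ih =>
    obtain ⟨u, hu, h⟩ := ih
    refine ⟨_, fun p => mul_ne_zero (chi_ne_zero (uY_ne hL j) p) (hu (p + -ee j)), ?_⟩
    rw [List.map_cons, List.prod_cons, h, genOp, shiftOp_mul, deg_cons, neg_add_rev]

/-- An `x`-word sends `y^p` to a nonzero multiple of `y^{p - deg}` when `deg ≤ p`, and kills it
otherwise. -/
theorem wordX_op (hQ : ∀ i, Q i ≠ 0) (hL : ∀ i j, L i j * L j i = 1)
    (hru : ∀ i, ∀ m : ℕ, 0 < m → Q i ^ m ≠ 1) (l : List (Fin n)) :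
    ∃ b : (Fin n → ℤ) → K, (∀ p, (∀ i, 0 ≤ p i) → b p ≠ 0) ∧
      (∀ p, ∀ i, p i < 0 → 0 ≤ p i + deg l i → b p = 0) ∧
      (l.map fun j => genOp F Q L (Sum.inr j)).prod = shiftOp F b (deg l) := by
  induction l with
  | nil =>
    have h0 : deg ([] : List (Fin n)) = 0 := by ext; simp [deg]
    refine ⟨fun _ => 1, fun _ _ => one_ne_zero, fun p i h h' => ?_, ?_⟩
    · simp [h0] at h'
      omega
    · ext f p
      simp [shiftOp, h0]
  | cons j l ih =>
    obtain ⟨b, hb, hb', h⟩ := ih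
    refine ⟨fun p => wX Q L j p * b (p + ee j), fun p hp => mul_ne_zero (mul_ne_zero
      (chi_ne_zero (uX_ne hQ hL j) p) ?_) (hb _ fun i => ?_), fun p i hi hi' => ?_, ?_⟩
    · obtain ⟨m, hm⟩ := Int.eq_ofNat_of_zero_le (hp j)
      rw [hm, sub_ne_zero]
      exact_mod_cast hru j (m + 1) m.succ_pos
    · by_cases hij : i = j
      · subst hij
        simpa [ee_self] using (hp i).trans (by omega)
      · simpa [ee_ne hij] using hp i
    · rw [deg_cons, Pi.add_apply] at hi'
      by_cases hij : i = j
      · subst hij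
        rw [ee_self] at hi'
        by_cases hp : p i + 1 = 0
        · simp [wX, hp]
        · simp only
          rw [hb' (p + ee i) i (by simp only [Pi.add_apply, ee_self]; omega)
            (by simp only [Pi.add_apply, ee_self]; omega), mul_zero]
      · rw [ee_ne hij] at hi'
        simp only
        rw [hb' (p + ee j) i (by simp only [Pi.add_apply, ee_ne hij]; omega)
          (by simp only [Pi.add_apply, ee_ne hij]; omega), mul_zero]
    · rw [List.map_cons, List.prod_cons, h, genOp, shiftOp_mul, deg_cons, add_comm (ee j)]

theorem deg_toList (s : Multiset (Fin n)) (i : Fin n) : deg s.toList i = (s.count i : ℤ) := by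
  rw [deg, ← Multiset.coe_count, Multiset.coe_toList]

/-- Linear independence of the standard monomials: evaluate `∑ c_{rs} y^r x^s` on `y^{s₀}` with
`s₀` minimal among the `s` that occur. Only the terms with `s = s₀` survive, and they give
nonzero multiples of the distinct `y^r`. -/
theorem stdMon_indep {qt qti : Fin n → F} {lt lti : Fin n → Fin n → F}
    (hinj : Function.Injective (algebraMap F K))
    (hqti : ∀ i, qt i * qti i = 1) (hlti : ∀ i j, lt i j * lti i j = 1)
    (hlt : ∀ i j, lt i j * lt j i = 1) (hru : ∀ i, ∀ m : ℕ, 0 < m → qt i ^ m ≠ 1)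
    (c : (Multiset (Fin n) × Multiset (Fin n)) →₀ F)
    (hc : (c.sum fun p u => u • stdMon F n qt qti lt lti p) = 0) : c = 0 := by
  classical
  set Q : Fin n → K := fun i => algebraMap F K (qt i) with hQdef
  set L : Fin n → Fin n → K := fun i j => algebraMap F K (lt i j) with hLdef
  have hL : ∀ i j, L i j * L j i = 1 := fun i j => by
    simp only [L, ← map_mul, hlt, map_one]
  have hQ : ∀ i, Q i ≠ 0 := fun i => by
    refine left_ne_zero_of_mul_eq_one (b := algebraMap F K (qti i)) ?_
    simp only [Q, ← map_mul, hqti, map_one]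
  have hruK : ∀ i, ∀ m : ℕ, 0 < m → Q i ^ m ≠ 1 := fun i m hm h => by
    refine hru i m hm (hinj ?_)
    rw [map_pow, map_one]
    exact h
  let ρ : RingQuot (AFRel F n qt qti lt lti) →ₐ[F] Module.End F ((Fin n → ℤ) → K) :=
    RingQuot.liftAlgHom F ⟨FreeAlgebra.lift F (genOp F Q L),
      fun _ _ h => genOp_rel hqti hlti hlt h⟩
  have hρY : ∀ i, ρ (Yf F n qt qti lt lti i) = genOp F Q L (Sum.inl i) := fun i => by
    rw [Yf_eq]
    simp only [ρ, RingQuot.liftAlgHom_mkAlgHom_apply, FreeAlgebra.lift_ι_apply]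
  have hρX : ∀ i, ρ (Xf F n qt qti lt lti i) = genOp F Q L (Sum.inr i) := fun i => by
    rw [Xf_eq]
    simp only [ρ, RingQuot.liftAlgHom_mkAlgHom_apply, FreeAlgebra.lift_ι_apply]
  choose u hu hu' using wordY_op (F := F) (Q := Q) hL
  choose b hb hb0 hb' using wordX_op (F := F) hQ hL hruK
  have hρ : ∀ p, ρ (stdMon F n qt qti lt lti p) =
      shiftOp F (fun x => u p.1.toList x * b p.2.toList (x + -deg p.1.toList))
        (-deg p.1.toList + deg p.2.toList) := fun p => by
    rw [stdMon, wordYX, map_mul, map_list_prod, map_list_prod, List.map_map, List.map_map,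
      ← shiftOp_mul, ← hu', ← hb']
    congr 3
    · ext1 i; exact hρY i
    · ext1 i; exact hρX i
  by_contra hne
  obtain ⟨⟨r₀, s₀⟩, hmem, hmin⟩ := Set.Finite.exists_minimalFor
    (fun p : Multiset (Fin n) × Multiset (Fin n) => p.2) (c.support : Set _)
    (Finset.finite_toSet _) (by simpa [Finset.nonempty_iff_ne_empty] using hne)
  have h := congrArg ρ hc
  rw [map_zero, Finsupp.sum, map_sum] at h
  have h' := congrFun (congrArg (fun T : Module.End F ((Fin n → ℤ) → K) =>
    T (Pi.single (deg s₀.toList) 1)) h) (deg r₀.toList)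
  simp only [map_smul, hρ, LinearMap.sum_apply, LinearMap.smul_apply, LinearMap.zero_apply,
    Finset.sum_apply, Pi.smul_apply, Pi.zero_apply] at h'
  rw [Finset.sum_eq_single (r₀, s₀)] at h'
  · simp only [shiftOp, LinearMap.coe_mk, AddHom.coe_mk, add_neg_cancel,
      add_neg_cancel_left, Pi.single_eq_same, mul_one, Algebra.smul_def] at h'
    rcases mul_eq_zero.1 h' with h' | h'
    · have := hinj (h'.trans (map_zero _).symm)
      simp at hmem
      exact hmem this
    · exact mul_ne_zero (hu _ _) (hb s₀.toList 0 fun i => le_rfl) h'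
  · rintro ⟨r, s⟩ hp hne'
    simp only [shiftOp, LinearMap.coe_mk, AddHom.coe_mk]
    by_cases hd : deg r₀.toList + (-deg r.toList + deg s.toList) = deg s₀.toList
    · have hd' : ∀ i, (r₀.count i : ℤ) - r.count i + s.count i = s₀.count i := fun i => by
        have := congrFun hd i
        simp only [Pi.add_apply, Pi.neg_apply, deg_toList] at this
        omega
      by_cases hs : s ≤ s₀
      · have hs' : s = s₀ := le_antisymm hs (hmin (by simpa using hp) hs)
        subst hs'
        have : r = r₀ := by
          ext i
          have := hd' i
          omega
        exact absurd (by rw [this]) hne'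
      · rw [Multiset.le_iff_count] at hs
        push Not at hs
        obtain ⟨i, hi⟩ := hs
        have := hd' i
        rw [hb0 s.toList _ i, mul_zero, zero_mul, smul_zero]
        · simp only [Pi.add_apply, Pi.neg_apply, deg_toList]; omega
        · simp only [Pi.add_apply, Pi.neg_apply, deg_toList]; omega
    · rw [Pi.single_eq_of_ne hd, mul_zero, smul_zero]
  · intro h
    exact absurd hmem h

/-- `A` is torsion free over `F`. -/
theorem smul_regular {qt qti : Fin n → F} {lt lti : Fin n → Fin n → F}
    (hinj : Function.Injective (algebraMap F K))
    (hqti : ∀ i, qt i * qti i = 1) (hlti : ∀ i j, lt i j * lti i j = 1)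
    (hlt : ∀ i j, lt i j * lt j i = 1) (hru : ∀ i, ∀ m : ℕ, 0 < m → qt i ^ m ≠ 1)
    {τ : F} (hτ : τ ≠ 0) {a : RingQuot (AFRel F n qt qti lt lti)} (ha : τ • a = 0) : a = 0 := by
  obtain ⟨c, rfl⟩ := exists_stdMon_sum hqti hlti a
  have h : τ • c = 0 := by
    refine stdMon_indep hinj hqti hlti hlt hru _ ?_
    rw [Finsupp.sum_smul_index (by simp)]
    simpa [Finsupp.sum, Finset.smul_sum, smul_smul] using ha
  have hc : c = 0 := by
    ext p
    have h1 : τ * c p = 0 := by simpa using DFunLike.congr_fun h p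
    have h2 : algebraMap F K τ * algebraMap F K (c p) = 0 := by rw [← map_mul, h1, map_zero]
    rcases mul_eq_zero.1 h2 with h2 | h2
    · exact absurd (hinj (h2.trans (map_zero _).symm)) hτ
    · exact hinj (h2.trans (map_zero _).symm)
  simp [hc]

end Representation


/-! ### The semiclassical limit -/

section Limit

/-- If `τ` is central and regular in `A` and `A/τA` is a commutative ring `R`, then
`{ā, b̄} = image of τ⁻¹(ab - ba)` is a well-defined Poisson bracket on `R`. -/
theorem exists_poissonBr {A R : Type} [Ring A] [CommRing R] (π : A →+* R)
    (hsurj : Function.Surjective π) (τ : A) (hcent : ∀ a, τ * a = a * τ)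
    (hreg : ∀ a, τ * a = 0 → a = 0) (hτ : π τ = 0) (hker : ∀ a, π a = 0 → ∃ b, a = τ * b) :
    ∃ B : PoissonBr R, ∀ a b c : A, a * b - b * a = τ * c → B.br (π a) (π b) = π c := by
  have hcancel : ∀ a b, τ * a = τ * b → a = b := fun a b h =>
    sub_eq_zero.1 (hreg _ (by rw [mul_sub, h, sub_self]))
  have hcomm : ∀ a b, ∃ c, a * b - b * a = τ * c := fun a b =>
    hker _ (by rw [map_sub, map_mul, map_mul, mul_comm, sub_self])
  have hlift : ∀ a a', π a = π a' → ∃ u, a = a' + τ * u := fun a a' h => by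
    obtain ⟨u, hu⟩ := hker (a - a') (by rw [map_sub, h, sub_self])
    exact ⟨u, by rw [← hu]; abel⟩
  choose cc hcc using hcomm
  choose sec hsec using hsurj
  have key : ∀ a b c : A, a * b - b * a = τ * c →
      π (cc (sec (π a)) (sec (π b))) = π c := by
    intro a b c h
    obtain ⟨u, hu⟩ := hlift (sec (π a)) a (hsec _)
    obtain ⟨v, hv⟩ := hlift (sec (π b)) b (hsec _)
    have h1 := hcc (sec (π a)) (sec (π b))
    have h2 : cc (sec (π a)) (sec (π b)) =
        c + (a * v - v * a) + (u * b - b * u) + τ * (u * v - v * u) := by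
      apply hcancel
      rw [← h1, hu, hv]
      calc (a + τ * u) * (b + τ * v) - (b + τ * v) * (a + τ * u)
          = (a * b - b * a) + (a * τ * v - τ * v * a) + (τ * u * b - b * τ * u)
            + (τ * (u * τ) * v - τ * (v * τ) * u) := by noncomm_ring
        _ = _ := by
          rw [h, ← hcent a, ← hcent b, ← hcent u, ← hcent v]
          noncomm_ring
    rw [h2]
    simp [hτ, mul_comm]
  have hbr : ∀ x y, ∀ a b c : A, π a = x → π b = y → a * b - b * a = τ * c →
      π (cc (sec x) (sec y)) = π c := by
    rintro _ _ a b c rfl rfl h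
    exact key a b c h
  refine ⟨⟨fun x y => π (cc (sec x) (sec y)), ?_, ?_, ?_, ?_⟩, key⟩
  · intro x y z
    rw [← map_add]
    refine hbr _ _ (sec x + sec y) (sec z) _ (by simp [hsec]) (hsec z) ?_
    rw [mul_add τ, ← hcc, ← hcc]
    noncomm_ring
  · intro x y
    rw [← map_neg]
    refine hbr _ _ (sec x) (sec y) _ (hsec x) (hsec y) ?_
    rw [mul_neg, ← hcc]
    noncomm_ring
  · intro x y z
    set a := sec x with ha
    set b := sec y with hb
    set c := sec z with hc
    have e1 := hbr x (π (cc b c)) a (cc b c) (cc a (cc b c)) (hsec x) rfl (hcc _ _)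
    have e2 := hbr (π (cc a b)) z (cc a b) c (cc (cc a b) c) rfl (hsec z) (hcc _ _)
    have e3 := hbr y (π (cc a c)) b (cc a c) (cc b (cc a c)) (hsec y) rfl (hcc _ _)
    rw [← ha] at e1
    rw [← hc] at e2
    rw [← hb] at e3
    rw [e1, e2, e3, ← map_add]
    congr 1
    -- both sides agree after multiplication by `τ²`, where this is the Jacobi identity in `A`
    have comm_left : ∀ d f, τ * (τ * cc d f) = τ * d * f - f * (τ * d) := fun d f => by
      rw [← hcc, mul_sub, ← mul_assoc, ← mul_assoc, ← mul_assoc, hcent f]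
    have comm_right : ∀ d f, τ * (τ * cc d f) = d * (τ * f) - τ * f * d := fun d f => by
      rw [← hcc, mul_sub, ← mul_assoc, ← mul_assoc, ← mul_assoc, hcent d]
    apply hcancel
    apply hcancel
    rw [mul_add, mul_add, comm_right a, comm_left (cc a b), comm_right b,
      ← hcc, ← hcc, ← hcc]
    noncomm_ring
  · intro x y z
    have h : x * π (cc (sec y) (sec z)) + π (cc (sec x) (sec z)) * y =
        π (sec x * cc (sec y) (sec z) + cc (sec x) (sec z) * sec y) := by
      simp [hsec]
    rw [h]
    refine hbr _ _ (sec x * sec y) (sec z) _ (by simp [hsec]) (hsec z) ?_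
    rw [mul_add τ, ← mul_assoc τ (sec x), hcent (sec x), mul_assoc (sec x) τ, ← hcc,
      ← mul_assoc τ, ← hcc]
    noncomm_ring

variable {F : Type} [CommRing F] {n : ℕ}

/-- The exponent vector of the monomial `y^r x^s` of `ℂ[y_1, x_1, …, y_n, x_n]`. -/
noncomputable def expo (p : Multiset (Fin n) × Multiset (Fin n)) : (Fin n ⊕ Fin n) →₀ ℕ :=
  Multiset.toFinsupp (p.1.map Sum.inl + p.2.map Sum.inr)

theorem expo_injective : Function.Injective (expo (n := n)) := by
  classical
  rintro ⟨r, s⟩ ⟨r', s'⟩ h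
  have h' := Multiset.toFinsupp.injective h
  have hr : ∀ r s : Multiset (Fin n), ∀ i,
      (r.map Sum.inl + s.map Sum.inr : Multiset (Fin n ⊕ Fin n)).count (Sum.inl i) = r.count i := by
    intro r s i
    rw [Multiset.count_add, Multiset.count_map_eq_count' _ _ Sum.inl_injective,
      Multiset.count_eq_zero_of_notMem (s := s.map Sum.inr) (by simp), add_zero]
  have hs : ∀ r s : Multiset (Fin n), ∀ i,
      (r.map Sum.inl + s.map Sum.inr : Multiset (Fin n ⊕ Fin n)).count (Sum.inr i) = s.count i := by
    intro r s i
    rw [Multiset.count_add, Multiset.count_map_eq_count' _ _ Sum.inr_injective,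
      Multiset.count_eq_zero_of_notMem (s := r.map Sum.inl) (by simp), zero_add]
  have h1 : r = r' := by
    ext i
    rw [← hr r s, ← hr r' s']
    exact congrArg _ h'
  have h2 : s = s' := by
    ext i
    rw [← hs r s, ← hs r' s']
    exact congrArg _ h'
  rw [h1, h2]

theorem prod_X_eq_monomial {σ : Type} [DecidableEq σ] (m : Multiset σ) :
    (m.map (MvPolynomial.X : σ → MvPolynomial σ ℂ)).prod =
      MvPolynomial.monomial (Multiset.toFinsupp m) 1 := by
  induction m using Multiset.induction_on with
  | empty => simp
  | cons a m ih =>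
    rw [Multiset.map_cons, Multiset.prod_cons, ih, ← Multiset.singleton_add, map_add,
      Multiset.toFinsupp_singleton, MvPolynomial.X, MvPolynomial.monomial_mul, one_mul]

variable {qt qti : Fin n → F} {lt lti : Fin n → Fin n → F}

/-- Reduction at a point `ev` of the coefficient ring at which all parameters become `1`. -/
theorem exists_reduction (ev : F →+* ℂ)
    (hq : ∀ i, ev (qt i) = 1) (hqi : ∀ i, ev (qti i) = 1) (hl : ∀ i j, ev (lt i j) = 1)
    (hli : ∀ i j, ev (lti i j) = 1) :
    ∃ π : RingQuot (AFRel F n qt qti lt lti) →+* MvPolynomial (Fin n ⊕ Fin n) ℂ,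
      (∀ i, π (Yf F n qt qti lt lti i) = yP n i) ∧ (∀ i, π (Xf F n qt qti lt lti i) = xP n i) ∧
      ∀ c : F, π (algebraMap F _ c) = MvPolynomial.C (ev c) := by
  let _ : Algebra F (MvPolynomial (Fin n ⊕ Fin n) ℂ) := (MvPolynomial.C.comp ev).toAlgebra
  have hsmul : ∀ (c : F) (P : MvPolynomial (Fin n ⊕ Fin n) ℂ),
      c • P = MvPolynomial.C (ev c) * P := fun c P => Algebra.smul_def c P
  let f : FreeAlgebra F (Fin n ⊕ Fin n) →ₐ[F] MvPolynomial (Fin n ⊕ Fin n) ℂ :=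
    FreeAlgebra.lift F MvPolynomial.X
  have hf : ∀ ⦃u v⦄, AFRel F n qt qti lt lti u v → f u = f v := by
    intro u v h
    cases h with
    | yy i j h => simp [f, map_smul, hsmul, hl, mul_comm]
    | yx i j h => simp [f, map_smul, hsmul, hl, mul_comm]
    | xy i j h => simp [f, map_smul, hsmul, hl, hq, mul_comm]
    | xx i j h => simp [f, map_smul, hsmul, hli, hqi, mul_comm]
    | weyl i =>
      simp only [f, map_smul, map_sub, map_mul, FreeAlgebra.lift_ι_apply]
      simp [hsmul, hq, mul_comm]
  refine ⟨(RingQuot.liftAlgHom F ⟨f, hf⟩ : _ →ₐ[F] _), fun i => ?_, fun i => ?_, fun c => ?_⟩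
  · rw [Yf_eq]
    simp only [AlgHom.coe_toRingHom, RingQuot.liftAlgHom_mkAlgHom_apply]
    simp [f, yP]
  · rw [Xf_eq]
    simp only [AlgHom.coe_toRingHom, RingQuot.liftAlgHom_mkAlgHom_apply]
    simp [f, xP]
  · exact AlgHom.commutes (RingQuot.liftAlgHom F ⟨f, hf⟩) c

theorem reduction_stdMon (π : RingQuot (AFRel F n qt qti lt lti) →+*
      MvPolynomial (Fin n ⊕ Fin n) ℂ)
    (hY : ∀ i, π (Yf F n qt qti lt lti i) = yP n i)
    (hX : ∀ i, π (Xf F n qt qti lt lti i) = xP n i)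
    (p : Multiset (Fin n) × Multiset (Fin n)) :
    π (stdMon F n qt qti lt lti p) = MvPolynomial.monomial (expo p) 1 := by
  have h1 : π ∘ Yf F n qt qti lt lti = MvPolynomial.X ∘ Sum.inl := funext hY
  have h2 : π ∘ Xf F n qt qti lt lti = MvPolynomial.X ∘ Sum.inr := funext hX
  rw [expo, ← prod_X_eq_monomial, Multiset.map_add, Multiset.prod_add, Multiset.map_map,
    Multiset.map_map, stdMon, wordYX, map_mul, map_list_prod, map_list_prod, List.map_map,
    List.map_map, h1, h2, ← Multiset.prod_coe, ← Multiset.prod_coe, ← Multiset.map_coe,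
    ← Multiset.map_coe, Multiset.coe_toList, Multiset.coe_toList]

/-- The kernel of the reduction is `τA`: distinct standard monomials reduce to distinct monomials,
so all coefficients of an element of the kernel vanish under `ev`. -/
theorem reduction_ker (ev : F →+* ℂ) (hqti : ∀ i, qt i * qti i = 1)
    (hlti : ∀ i j, lt i j * lti i j = 1) (τ : F) (hker : ∀ c, ev c = 0 → ∃ d, c = τ * d)
    (π : RingQuot (AFRel F n qt qti lt lti) →+* MvPolynomial (Fin n ⊕ Fin n) ℂ)
    (hY : ∀ i, π (Yf F n qt qti lt lti i) = yP n i)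
    (hX : ∀ i, π (Xf F n qt qti lt lti i) = xP n i)
    (hC : ∀ c : F, π (algebraMap F _ c) = MvPolynomial.C (ev c))
    (a : RingQuot (AFRel F n qt qti lt lti)) (ha : π a = 0) :
    ∃ b, a = algebraMap F _ τ * b := by
  obtain ⟨c, rfl⟩ := exists_stdMon_sum hqti hlti a
  have hπ : ∀ p, π (c p • stdMon F n qt qti lt lti p) =
      MvPolynomial.monomial (expo p) (ev (c p)) := fun p => by
    rw [Algebra.smul_def, map_mul, hC, reduction_stdMon π hY hX, MvPolynomial.C_mul_monomial,
      mul_one]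
  have hc : ∀ p, ∃ d, c p = τ * d := by
    intro p
    apply hker
    by_cases hp : p ∈ c.support
    · have h := congrArg (MvPolynomial.coeff (expo p)) ha
      rw [Finsupp.sum, map_sum, MvPolynomial.coeff_sum, Finset.sum_eq_single p] at h
      · simpa [hπ] using h
      · intro p' _ hne
        rw [hπ, MvPolynomial.coeff_monomial, if_neg fun h => hne (expo_injective h)]
      · intro h
        exact absurd hp h
    · rw [Finsupp.notMem_support_iff.1 hp, map_zero]
  choose d hd using hc
  refine ⟨∑ p ∈ c.support, d p • stdMon F n qt qti lt lti p, ?_⟩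
  rw [Finsupp.sum, ← Algebra.smul_def, Finset.smul_sum]
  refine Finset.sum_congr rfl fun p _ => ?_
  rw [smul_smul, ← hd]

end Limit


/-! ### The statement over an abstract coefficient ring -/

section Core

variable {F : Type} [CommRing F] {n : ℕ} {K : Type} [Field K] [Algebra F K]
  {qt qti : Fin n → F} {lt lti : Fin n → Fin n → F}

/-- The statement over an abstract coefficient domain `F`, embedded in a field `K`, with a point
`ev : F → ℂ` whose kernel is generated by `τ`. The derivative of `c` at the point means the value
at it of `(c - 1)/τ`. -/
theorem core (hinj : Function.Injective (algebraMap F K))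
    (hqti : ∀ i, qt i * qti i = 1) (hlti : ∀ i j, lt i j * lti i j = 1)
    (hlt : ∀ i j, lt i j * lt j i = 1) (hru : ∀ i, ∀ m : ℕ, 0 < m → qt i ^ m ≠ 1)
    (ev : F →+* ℂ) (hev : Function.Surjective ev) (τ : F) (hτ0 : τ ≠ 0) (hevτ : ev τ = 0)
    (hker : ∀ c, ev c = 0 → ∃ d, c = τ * d)
    (dq : Fin n → ℂ) (hdq : ∀ i, ∃ d, qt i - 1 = τ * d ∧ ev d = dq i)
    (dlam : Fin n → Fin n → ℂ) (hdlam : ∀ i j, ∃ d, lt i j - 1 = τ * d ∧ ev d = dlam i j)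
    (tA : RingQuot (AFRel F n qt qti lt lti)) (htA : tA - 1 = algebraMap F _ τ) :
    (tA - 1 ≠ 0 ∧ ¬ IsUnit (tA - 1) ∧
      (∀ a, (tA - 1) * a = 0 → a = 0) ∧ (∀ a, a * (tA - 1) = 0 → a = 0)) ∧
    (∀ x y : RingQuot (relT tA), x * y = y * x) ∧
    ∃ φ : RingQuot (relT tA) ≃+* MvPolynomial (Fin n ⊕ Fin n) ℂ,
      (∀ i : Fin n,
        φ (RingQuot.mkRingHom (relT tA) (Yf F n qt qti lt lti i)) = yP n i) ∧
      (∀ i : Fin n,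
        φ (RingQuot.mkRingHom (relT tA) (Xf F n qt qti lt lti i)) = xP n i) ∧
      (∀ c : F,
        φ (RingQuot.mkRingHom (relT tA) (RingQuot.mkRingHom (AFRel F n qt qti lt lti)
            (algebraMap F (FreeAlgebra F (Fin n ⊕ Fin n)) c)))
          = MvPolynomial.C (ev c)) ∧
      ∃ B : PoissonBr (MvPolynomial (Fin n ⊕ Fin n) ℂ),
        (∀ a b c : RingQuot (AFRel F n qt qti lt lti), a * b - b * a = (tA - 1) * c →
          B.br (φ (RingQuot.mkRingHom (relT tA) a)) (φ (RingQuot.mkRingHom (relT tA) b))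
            = φ (RingQuot.mkRingHom (relT tA) c)) ∧
        (∀ i j : Fin n, i < j → B.br (yP n j) (yP n i) = dlam j i • (yP n i * yP n j)) ∧
        (∀ i j : Fin n, i < j → B.br (yP n j) (xP n i) = dlam i j • (xP n i * yP n j)) ∧
        (∀ i j : Fin n, i < j →
          B.br (xP n j) (yP n i) = (dq i + dlam i j) • (yP n i * xP n j)) ∧
        (∀ i j : Fin n, i < j →
          B.br (xP n j) (xP n i) = (-(dq i + dlam i j)) • (xP n i * xP n j)) ∧
        (∀ i : Fin n, B.br (xP n i) (yP n i) = dq i • zP n ((i : ℕ) + 1)) := by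
  choose Dq hDq hevDq using hdq
  choose Dl hDl hevDl using hdlam
  have hq : ∀ i, ev (qt i) = 1 := fun i => by
    rw [← sub_eq_zero, ← map_one ev, ← map_sub, hDq, map_mul, hevτ, zero_mul]
  have hl : ∀ i j, ev (lt i j) = 1 := fun i j => by
    rw [← sub_eq_zero, ← map_one ev, ← map_sub, hDl, map_mul, hevτ, zero_mul]
  have hqi : ∀ i, ev (qti i) = 1 := fun i => by
    rw [← one_mul (ev _), ← hq i, ← map_mul, hqti, map_one, hq]
  have hli : ∀ i j, ev (lti i j) = 1 := fun i j => by
    rw [← one_mul (ev _), ← hl i j, ← map_mul, hlti, map_one, hl]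
  obtain ⟨π, hY, hX, hC⟩ := exists_reduction ev hq hqi hl hli
  have hπker := reduction_ker ev hqti hlti τ hker π hY hX hC
  have hπτ : π (tA - 1) = 0 := by rw [htA, hC, hevτ, map_zero]
  have hπsurj : Function.Surjective π := by
    intro P
    induction P using MvPolynomial.induction_on with
    | C a =>
      obtain ⟨c, rfl⟩ := hev a
      exact ⟨_, hC c⟩
    | add P P' hP hP' =>
      obtain ⟨a, rfl⟩ := hP
      obtain ⟨b, rfl⟩ := hP'
      exact ⟨a + b, map_add _ _ _⟩
    | mul_X P x hP =>
      obtain ⟨a, rfl⟩ := hP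
      cases x with
      | inl i => exact ⟨a * Yf F n qt qti lt lti i, by rw [map_mul, hY, yP]⟩
      | inr i => exact ⟨a * Xf F n qt qti lt lti i, by rw [map_mul, hX, xP]⟩
  have hcent : ∀ a, (tA - 1) * a = a * (tA - 1) := fun a => by
    rw [htA, Algebra.commutes]
  have hreg : ∀ a, (tA - 1) * a = 0 → a = 0 := fun a h => by
    rw [htA, ← Algebra.smul_def] at h
    exact smul_regular hinj hqti hlti hlt hru hτ0 h
  have hone : (1 : RingQuot (AFRel F n qt qti lt lti)) ≠ 0 := fun h => by
    have := congrArg π h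
    rw [map_one, map_zero] at this
    exact one_ne_zero this
  let ψ : RingQuot (relT tA) →+* MvPolynomial (Fin n ⊕ Fin n) ℂ :=
    RingQuot.lift ⟨π, by rintro x y ⟨rfl, rfl⟩; rw [hπτ, map_zero]⟩
  have hψ : ∀ a, ψ (RingQuot.mkRingHom (relT tA) a) = π a := fun a =>
    RingQuot.lift_mkRingHom_apply π _ a
  have hψinj : Function.Injective ψ := by
    rw [injective_iff_map_eq_zero]
    intro x hx
    obtain ⟨a, rfl⟩ := RingQuot.mkRingHom_surjective _ x
    rw [hψ] at hx
    obtain ⟨b, rfl⟩ := hπker a hx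
    rw [← htA, map_mul, RingQuot.mkRingHom_rel (r := relT tA) ⟨rfl, rfl⟩, map_zero, zero_mul]
  have hψsurj : Function.Surjective ψ := fun P => by
    obtain ⟨a, rfl⟩ := hπsurj P
    exact ⟨_, hψ a⟩
  refine ⟨⟨fun h => hone (hreg 1 (by rw [h, zero_mul])), fun h => ?_, hreg, fun a h =>
    hreg a (by rw [hcent, h])⟩, fun x y => hψinj (by rw [map_mul, map_mul, mul_comm]), ?_⟩
  · have := h.map π
    rw [hπτ] at this
    exact not_isUnit_zero this
  obtain ⟨B, hB⟩ := exists_poissonBr π hπsurj (tA - 1) hcent hreg hπτ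
    (fun a ha => by rw [htA]; exact hπker a ha)
  have hB' : ∀ (a b c : RingQuot (AFRel F n qt qti lt lti)) (d : F),
      a * b - b * a = (τ * d) • c → B.br (π a) (π b) = ev d • π c := by
    intro a b c d h
    rw [hB a b (d • c) (by rw [h, htA, ← Algebra.smul_def, smul_smul]), Algebra.smul_def, map_mul,
      hC, MvPolynomial.smul_eq_C_mul]
  have hsub : ∀ (c : F) (a : RingQuot (AFRel F n qt qti lt lti)), (c - 1) • a = c • a - a :=
    fun c a => by rw [Algebra.smul_def, Algebra.smul_def, map_sub, map_one, sub_mul, one_mul]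
  have hbij : Function.Bijective ψ := ⟨hψinj, hψsurj⟩
  refine ⟨RingEquiv.ofBijective ψ hbij, fun i => ?_, fun i => ?_, fun c => ?_, B,
    fun a b c h => ?_, fun i j h => ?_, fun i j h => ?_, fun i j h => ?_, fun i j h => ?_,
    fun i => ?_⟩
  · change ψ _ = _
    rw [hψ, hY]
  · change ψ _ = _
    rw [hψ, hX]
  · change ψ _ = _
    rw [hψ, mk_algebraMap, hC]
  · change B.br (ψ _) (ψ _) = ψ _
    rw [hψ, hψ, hψ]
    exact hB a b c h
  · rw [← hY, ← hY, ← map_mul, ← hevDl]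
    apply hB'
    rw [rel_yy h, ← hDl, hsub]
  · rw [← hY, ← hX, ← map_mul, ← hevDl]
    apply hB'
    rw [rel_yx h, ← hDl, hsub]
  · have h1 : ev (Dq i * lt i j + Dl i j) = dq i + dlam i j := by
      rw [map_add, map_mul, hl, mul_one, hevDq, hevDl]
    rw [← hY, ← hX, ← map_mul, ← h1]
    apply hB'
    rw [rel_xy h, mul_add, ← hDl, ← mul_assoc, ← hDq,
      show (qt i - 1) * lt i j + (lt i j - 1) = qt i * lt i j - 1 by ring, hsub]
  · have h1 : ev (-((Dq i * lt i j + Dl i j) * (qti i * lti i j))) = -(dq i + dlam i j) := by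
      rw [map_neg, map_mul, map_add, map_mul, map_mul, hl, hqi, hli, mul_one, mul_one, mul_one,
        hevDq, hevDl]
    rw [← hX, ← hX, ← map_mul, ← h1]
    apply hB'
    have h2 : τ * -((Dq i * lt i j + Dl i j) * (qti i * lti i j)) = qti i * lti i j - 1 := by
      linear_combination (qti i * lti i j) * (lt i j * hDq i + hDl i j)
        - lt i j * lti i j * hqti i - hlti i j
    rw [rel_xx h, h2, hsub]
  · have h1 : π (1 + ∑ k ∈ Finset.Iic i, Yf F n qt qti lt lti k * Xf F n qt qti lt lti k) =
        zP n ((i : ℕ) + 1) := by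
      rw [map_add, map_one, map_sum, zP]
      congr 1
      refine Finset.sum_congr ?_ fun k _ => by rw [map_mul, hY, hX]
      ext k
      simp only [Finset.mem_Iic, Finset.mem_filter, Finset.mem_univ, true_and, Fin.le_def]
      omega
    rw [← hX, ← hY, ← h1, ← hevDq]
    apply hB'
    have h2 := rel_weyl (F := F) (qt := qt) (qti := qti) (lt := lt) (lti := lti) i
    rw [sub_eq_iff_eq_add] at h2
    rw [← hDq, ← Finset.Iio_insert, Finset.sum_insert (by simp), h2]
    simp only [smul_add, hsub]
    abel

end Core


/-! ### Evaluating rational functions at a point -/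

section RationalFunctions

/-- The local ring of rational functions regular at `a`. -/
noncomputable def regAt (a : ℂ) : Subalgebra ℂ (RatFunc ℂ) where
  carrier := {f | f.denom.eval a ≠ 0}
  mul_mem' {f g} hf hg h := by
    have := Polynomial.eval_dvd (x := a) (RatFunc.denom_mul_dvd f g)
    rw [h, zero_dvd_iff, Polynomial.eval_mul] at this
    exact mul_ne_zero hf hg this
  add_mem' {f g} hf hg h := by
    have := Polynomial.eval_dvd (x := a) (RatFunc.denom_add_dvd f g)
    rw [h, zero_dvd_iff, Polynomial.eval_mul] at this
    exact mul_ne_zero hf hg this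
  algebraMap_mem' c := by
    rw [RatFunc.algebraMap_eq_C]
    simp

theorem mem_regAt {a : ℂ} {f : RatFunc ℂ} : f ∈ regAt a ↔ f.denom.eval a ≠ 0 := Iff.rfl

/-- Evaluation at `a`, as a ring homomorphism on the functions regular at `a`. -/
noncomputable def evAt (a : ℂ) : regAt a →+* ℂ where
  toFun f := RatFunc.eval (RingHom.id ℂ) a (f : RatFunc ℂ)
  map_one' := by simp
  map_zero' := by simp
  map_mul' f g := RatFunc.eval_mul _ _ (by rw [Polynomial.eval₂_id]; exact f.2)
    (by rw [Polynomial.eval₂_id]; exact g.2)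
  map_add' f g := RatFunc.eval_add _ _ (by rw [Polynomial.eval₂_id]; exact f.2)
    (by rw [Polynomial.eval₂_id]; exact g.2)

theorem algebraMap_mem_regAt (a : ℂ) (p : Polynomial ℂ) :
    algebraMap (Polynomial ℂ) (RatFunc ℂ) p ∈ regAt a := by
  rw [mem_regAt, RatFunc.denom_algebraMap]
  simp

theorem inv_mem_regAt {a : ℂ} {p : Polynomial ℂ} (hp : p.eval a ≠ 0) :
    (algebraMap (Polynomial ℂ) (RatFunc ℂ) p)⁻¹ ∈ regAt a := by
  intro h
  have := Polynomial.eval_dvd (x := a) (RatFunc.denom_div_dvd 1 p)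
  rw [map_one, one_div, h, zero_dvd_iff] at this
  exact hp this

theorem eval_algebraMap_poly (a : ℂ) (p : Polynomial ℂ) :
    RatFunc.eval (RingHom.id ℂ) a (algebraMap (Polynomial ℂ) (RatFunc ℂ) p) = p.eval a := by
  rw [RatFunc.eval_algebraMap]
  simp [Polynomial.eval₂_id]

/-- The coercion of a product of powers of units of a subalgebra of `ℂ(t)`. -/
theorem coe_prod_zpow {r : ℕ} (R : Subalgebra ℂ (RatFunc ℂ)) (E : Fin r → Rˣ) (s : Fin r → ℤ) :
    (((∏ k, E k ^ s k : Rˣ) : R) : RatFunc ℂ) = ∏ k, (((E k : Rˣ) : R) : RatFunc ℂ) ^ s k := by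
  let f : Rˣ →* RatFunc ℂ := (R.val : R →* RatFunc ℂ).comp (Units.coeHom R)
  change f (∏ k, E k ^ s k) = ∏ k, f (E k) ^ s k
  rw [map_prod]
  exact Finset.prod_congr rfl fun k _ => map_zpow f _ _

/-- If `∏ e_k^{s_k}` has a power equal to `1`, evaluate at `q₀` to conclude `s = 0`. -/
theorem exponents_eq_zero {r : ℕ} {η : Fin r → ℂ} (hη0 : ∀ k, η k ≠ 0)
    (hfree : ∀ a : Fin r → ℤ, ∏ k, η k ^ a k = 1 → a = 0) {q₀ : ℂ} {e : Fin r → Polynomial ℂ}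
    (heq : ∀ k, (e k).eval q₀ = η k) {s : Fin r → ℤ} {m : ℕ} (hm : 0 < m)
    (h : (∏ k, algebraMap (Polynomial ℂ) (RatFunc ℂ) (e k) ^ s k) ^ m = 1) : s = 0 := by
  have he0 : ∀ k, algebraMap (Polynomial ℂ) (RatFunc ℂ) (e k) ≠ 0 := fun k h0 => by
    rw [map_eq_zero_iff _ (RatFunc.algebraMap_injective ℂ)] at h0
    exact hη0 k (by rw [← heq, h0, Polynomial.eval_zero])
  let E : Fin r → (regAt q₀)ˣ := fun k =>
    ⟨⟨_, algebraMap_mem_regAt q₀ (e k)⟩,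
      ⟨_, inv_mem_regAt (p := e k) (by rw [heq]; exact hη0 k)⟩,
      Subtype.ext (mul_inv_cancel₀ (he0 k)), Subtype.ext (inv_mul_cancel₀ (he0 k))⟩
  let f : (regAt q₀)ˣ →* ℂ := (evAt q₀ : regAt q₀ →* ℂ).comp (Units.coeHom _)
  have hf : ∀ k, f (E k) = η k := fun k => (eval_algebraMap_poly q₀ (e k)).trans (heq k)
  have h1 : (∏ k, E k ^ s k) ^ m = 1 := by
    ext
    rw [Units.val_pow_eq_pow_val, SubmonoidClass.coe_pow, coe_prod_zpow]
    exact h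
  have h2 := congrArg f h1
  rw [map_pow, map_prod, map_one, ← Finset.prod_pow] at h2
  have h3 := hfree (fun k => s k * m) (by
    rw [← h2]
    refine Finset.prod_congr rfl fun k _ => ?_
    rw [map_zpow, hf, zpow_mul, zpow_natCast])
  ext k
  have := congrFun h3 k
  simp only [Pi.zero_apply, mul_eq_zero, Nat.cast_eq_zero] at this
  exact this.resolve_right (Nat.ne_of_gt hm)

/-- The units `u` of `F` with `(u - 1)/τ` taking the value `m` at the point `ev`, as a subgroup of
pairs `(u, m)`: this is the rule that the logarithmic derivative turns products into sums. -/
def derivSubgroup {F : Type} [CommRing F] (ev : F →+* ℂ) (τ : F) (hevτ : ev τ = 0) :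
    Subgroup (Fˣ × Multiplicative ℂ) where
  carrier := {p | ∃ d : F, (p.1 : F) - 1 = τ * d ∧ ev d = p.2.toAdd}
  one_mem' := ⟨0, by simp, by simp⟩
  mul_mem' := by
    rintro ⟨u, m⟩ ⟨u', m'⟩ ⟨d, hd, hm⟩ ⟨d', hd', hm'⟩
    have hu' : ev (u' : F) = 1 := by
      have := congrArg ev hd'
      rwa [map_sub, map_one, map_mul, hevτ, zero_mul, sub_eq_zero] at this
    refine ⟨d * u' + d', ?_, ?_⟩
    · simp only [Prod.mk_mul_mk, Units.val_mul] at *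
      linear_combination (u' : F) * hd + hd'
    · rw [map_add, map_mul, hu', mul_one, hm, hm']
      rfl
  inv_mem' := by
    rintro ⟨u, m⟩ ⟨d, hd, hm⟩
    simp only at hd hm
    have hu : ev (u : F) = 1 := by
      have := congrArg ev hd
      rwa [map_sub, map_one, map_mul, hevτ, zero_mul, sub_eq_zero] at this
    have hui : ev ((u⁻¹ : Fˣ) : F) = 1 := by
      rw [← one_mul (ev _), ← hu, ← map_mul, Units.mul_inv, map_one, hu]
    refine ⟨-(d * (u⁻¹ : Fˣ)), ?_, ?_⟩
    · simp only [Prod.inv_mk]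
      linear_combination -((u⁻¹ : Fˣ) : F) * hd + u.mul_inv
    · rw [map_neg, map_mul, hui, mul_one, hm]
      rfl

theorem deriv_prod_zpow {F : Type} [CommRing F] (ev : F →+* ℂ) (τ : F) (hevτ : ev τ = 0) {r : ℕ}
    (E : Fin r → Fˣ) (μ : Fin r → ℂ) (hE : ∀ k, ∃ d : F, (E k : F) - 1 = τ * d ∧ ev d = μ k)
    (s : Fin r → ℤ) :
    ∃ d : F, ((∏ k, E k ^ s k : Fˣ) : F) - 1 = τ * d ∧ ev d = ∑ k, (s k : ℂ) * μ k := by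
  have h : ∏ k, ((E k, Multiplicative.ofAdd (μ k)) : Fˣ × Multiplicative ℂ) ^ s k ∈
      derivSubgroup ev τ hevτ :=
    Subgroup.prod_mem _ fun k _ => Subgroup.zpow_mem _ (hE k) _
  obtain ⟨d, hd, hd'⟩ := h
  refine ⟨d, ?_, ?_⟩
  · rw [← hd, Prod.fst_prod]
    rfl
  · rw [hd', Prod.snd_prod, toAdd_prod]
    exact Finset.sum_congr rfl fun k _ => by simp

end RationalFunctions


/-- `t-1` is a nonzero nonunit non-zero-divisor of `A`, the quotient
`A/(t-1)A` is commutative and isomorphic to `ℂ[y_1,x_1,…,y_n,x_n]`, and the induced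
bracket `{ā,b̄} = image of (t-1)⁻¹(ab-ba)` makes it a Poisson algebra with the
stated brackets of generators: `A/(t-1)A` is the multi-parameter Poisson Weyl
algebra `A₁`. -/
theorem stmt_10 (n r : ℕ)
    -- Q and Λ with G(Q,Λ) torsion free, basis η, ℚ-linearly independent μ
    (q : Fin n → ℂ) (hq0 : ∀ i, q i ≠ 0) (hq1 : ∀ i, q i ≠ 1)
    (lam : Fin n → Fin n → ℂ) (hlam : ∀ i j, lam i j * lam j i = 1)
    (hlamii : ∀ i, lam i i = 1)
    (η : Fin r → ℂ) (hη0 : ∀ k, η k ≠ 0)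
    (hfree : ∀ a : Fin r → ℤ, ∏ k, η k ^ a k = 1 → a = 0)
    (μ : Fin r → ℂ) (hμ : LinearIndependent ℚ μ)
    (sq : Fin n → Fin r → ℤ) (hsq : ∀ i, q i = ∏ k, η k ^ sq i k)
    (slam : Fin n → Fin n → Fin r → ℤ) (hslam : ∀ i j, lam i j = ∏ k, η k ^ slam i j k)
    -- the derivatives at 1: q̃_i'(1) and λ̃_ij'(1)
    (dq : Fin n → ℂ) (hdq : ∀ i, dq i = ∑ k, (sq i k : ℂ) * μ k)
    (dlam : Fin n → Fin n → ℂ) (hdlam : ∀ i j, dlam i j = ∑ k, (slam i j k : ℂ) * μ k)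
    -- a non-root of unity q₀ and the interpolation polynomials e_k
    (q₀ : ℂ) (hq₀0 : q₀ ≠ 0) (hq₀1 : q₀ ≠ 1) (hq₀ru : ∀ m : ℕ, 0 < m → q₀ ^ m ≠ 1)
    (e : Fin r → Polynomial ℂ) (hdeg : ∀ k, (e k).natDegree ≤ 2)
    (heq : ∀ k, (e k).eval q₀ = η k) (he1 : ∀ k, (e k).eval 1 = 1)
    (he'1 : ∀ k, (Polynomial.derivative (e k)).eval 1 = μ k)
    -- the coefficient ring F = ℂ[t,t⁻¹][e_1⁻¹,…,e_r⁻¹]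
    (F : Subalgebra ℂ (RatFunc ℂ))
    (hF : F = Algebra.adjoin ℂ ({RatFunc.X, (RatFunc.X : RatFunc ℂ)⁻¹} ∪
      Set.range fun k => (algebraMap (Polynomial ℂ) (RatFunc ℂ) (e k))⁻¹))
    (tF : F) (htF : (tF : RatFunc ℂ) = RatFunc.X)
    -- the coefficients q̃_i, λ̃_ij and their inverses, as elements of F
    (qt qti : Fin n → F)
    (hqt : ∀ i, (qt i : RatFunc ℂ)
      = ∏ k, (algebraMap (Polynomial ℂ) (RatFunc ℂ) (e k)) ^ sq i k)
    (hqti : ∀ i, qt i * qti i = 1)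
    (lt lti : Fin n → Fin n → F)
    (hlt : ∀ i j, (lt i j : RatFunc ℂ)
      = ∏ k, (algebraMap (Polynomial ℂ) (RatFunc ℂ) (e k)) ^ slam i j k)
    (hlti : ∀ i j, lt i j * lti i j = 1)
    -- t ∈ A
    (tA : RingQuot (AFRel F n qt qti lt lti))
    (htA : tA = RingQuot.mkRingHom (AFRel F n qt qti lt lti)
      (algebraMap F (FreeAlgebra F (Fin n ⊕ Fin n)) tF)) :
    -- (1) t - 1 is nonzero, a nonunit, and a non-zero-divisor
    (tA - 1 ≠ 0 ∧ ¬ IsUnit (tA - 1) ∧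
      (∀ a, (tA - 1) * a = 0 → a = 0) ∧ (∀ a, a * (tA - 1) = 0 → a = 0)) ∧
    -- (2) A/(t-1)A is commutative
    (∀ x y : RingQuot (relT tA), x * y = y * x) ∧
    -- (3) A/(t-1)A ≅ ℂ[y_1,x_1,…,y_n,x_n] carrying the semiclassical-limit bracket
    ∃ φ : RingQuot (relT tA) ≃+* MvPolynomial (Fin n ⊕ Fin n) ℂ,
      (∀ i : Fin n,
        φ (RingQuot.mkRingHom (relT tA) (Yf F n qt qti lt lti i)) = yP n i) ∧
      (∀ i : Fin n,
        φ (RingQuot.mkRingHom (relT tA) (Xf F n qt qti lt lti i)) = xP n i) ∧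
      (∀ c : F,
        φ (RingQuot.mkRingHom (relT tA) (RingQuot.mkRingHom (AFRel F n qt qti lt lti)
            (algebraMap F (FreeAlgebra F (Fin n ⊕ Fin n)) c)))
          = MvPolynomial.C (RatFunc.eval (RingHom.id ℂ) 1 (c : RatFunc ℂ))) ∧
      ∃ B : PoissonBr (MvPolynomial (Fin n ⊕ Fin n) ℂ),
        -- {ā, b̄} is the image of (t-1)⁻¹(ab - ba)
        (∀ a b c : RingQuot (AFRel F n qt qti lt lti), a * b - b * a = (tA - 1) * c →
          B.br (φ (RingQuot.mkRingHom (relT tA) a)) (φ (RingQuot.mkRingHom (relT tA) b))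
            = φ (RingQuot.mkRingHom (relT tA) c)) ∧
        -- the bracket on generators
        (∀ i j : Fin n, i < j → B.br (yP n j) (yP n i) = dlam j i • (yP n i * yP n j)) ∧
        (∀ i j : Fin n, i < j → B.br (yP n j) (xP n i) = dlam i j • (xP n i * yP n j)) ∧
        (∀ i j : Fin n, i < j →
          B.br (xP n j) (yP n i) = (dq i + dlam i j) • (yP n i * xP n j)) ∧
        (∀ i j : Fin n, i < j →
          B.br (xP n j) (xP n i) = (-(dq i + dlam i j)) • (xP n i * xP n j)) ∧
        (∀ i : Fin n, B.br (xP n i) (yP n i) = dq i • zP n ((i : ℕ) + 1)) := by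
  have he0 : ∀ k, algebraMap (Polynomial ℂ) (RatFunc ℂ) (e k) ≠ 0 := fun k h0 => by
    rw [map_eq_zero_iff _ (RatFunc.algebraMap_injective ℂ)] at h0
    exact hη0 k (by rw [← heq, h0, Polynomial.eval_zero])
  have hXmem : (RatFunc.X : RatFunc ℂ) ∈ F := htF ▸ tF.2
  have hpoly : ∀ p : Polynomial ℂ, algebraMap (Polynomial ℂ) (RatFunc ℂ) p ∈ F := by
    intro p
    induction p using Polynomial.induction_on' with
    | add p p' hp hp' => rw [map_add]; exact F.add_mem hp hp'
    | monomial m c =>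
      rw [← Polynomial.C_mul_X_pow_eq_monomial, map_mul, map_pow, RatFunc.algebraMap_X,
        RatFunc.algebraMap_C, ← RatFunc.algebraMap_eq_C]
      exact F.mul_mem (F.algebraMap_mem c) (F.pow_mem hXmem m)
  have hinv : ∀ k, (algebraMap (Polynomial ℂ) (RatFunc ℂ) (e k))⁻¹ ∈ F := fun k => by
    rw [hF]
    exact Algebra.subset_adjoin (Or.inr ⟨k, rfl⟩)
  have hFreg : F ≤ regAt 1 := by
    rw [hF, Algebra.adjoin_le_iff]
    rintro f ((rfl | rfl) | ⟨k, rfl⟩)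
    · rw [← RatFunc.algebraMap_X]
      exact algebraMap_mem_regAt 1 _
    · rw [← RatFunc.algebraMap_X]
      exact inv_mem_regAt (by simp)
    · exact inv_mem_regAt (by rw [he1]; exact one_ne_zero)
  let ev : F →+* ℂ := (evAt 1).comp (Subalgebra.inclusion hFreg : F →+* regAt 1)
  have hevdef : ∀ c : F, ev c = RatFunc.eval (RingHom.id ℂ) 1 (c : RatFunc ℂ) := fun _ => rfl
  have hevpoly : ∀ p, ev ⟨_, hpoly p⟩ = p.eval 1 := fun p => eval_algebraMap_poly 1 p
  have hevC : ∀ z : ℂ, ev (algebraMap ℂ F z) = z := fun z => by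
    rw [hevdef, Subalgebra.coe_algebraMap, RatFunc.algebraMap_eq_C, RatFunc.eval_C]
    rfl
  have htFpoly : tF = ⟨_, hpoly Polynomial.X⟩ :=
    Subtype.ext (htF.trans RatFunc.algebraMap_X.symm)
  have hevt : ev (tF - 1) = 0 := by
    rw [map_sub, map_one, htFpoly, hevpoly, Polynomial.eval_X, sub_self]
  have hτ0 : tF - 1 ≠ 0 := fun h => by
    have h1 := congrArg (algebraMap F (RatFunc ℂ)) (sub_eq_zero.1 h)
    change (tF : RatFunc ℂ) = 1 at h1
    rw [htF, ← RatFunc.algebraMap_X, ← map_one (algebraMap (Polynomial ℂ) (RatFunc ℂ))] at h1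
    have h2 := congrArg (Polynomial.eval 0) (RatFunc.algebraMap_injective ℂ h1)
    simp at h2
  let E : Fin r → Fˣ := fun k => ⟨⟨_, hpoly (e k)⟩, ⟨_, hinv k⟩,
    Subtype.ext (mul_inv_cancel₀ (he0 k)), Subtype.ext (inv_mul_cancel₀ (he0 k))⟩
  -- the quotient of `p - p(1)` by `X - 1` has value `p'(1)` at `1`
  have hdivpoly : ∀ p : Polynomial ℂ, ∃ d : F,
      (⟨_, hpoly p⟩ : F) - algebraMap ℂ F (p.eval 1) = (tF - 1) * d ∧
        ev d = (Polynomial.derivative p).eval 1 := by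
    intro p
    obtain ⟨g, hg⟩ := Polynomial.X_sub_C_dvd_sub_C_eval (a := (1 : ℂ)) (p := p)
    refine ⟨⟨_, hpoly g⟩, ?_, ?_⟩
    · ext
      have := congrArg (algebraMap (Polynomial ℂ) (RatFunc ℂ)) hg
      rw [map_sub, map_mul, map_sub, RatFunc.algebraMap_X, RatFunc.algebraMap_C,
        RatFunc.algebraMap_C, map_one, ← RatFunc.algebraMap_eq_C] at this
      simpa [htF] using this
    · rw [hevpoly]
      have := congrArg (fun P => (Polynomial.derivative P).eval 1) hg
      simpa using this.symm
  have hE : ∀ k, ∃ d : F, (E k : F) - 1 = (tF - 1) * d ∧ ev d = μ k := fun k => by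
    obtain ⟨d, hd, hd'⟩ := hdivpoly (e k)
    rw [he1, map_one] at hd
    exact ⟨d, hd, hd'.trans (he'1 k)⟩
  have hEcoe : ∀ s : Fin r → ℤ, (((∏ k, E k ^ s k : Fˣ) : F) : RatFunc ℂ) =
      ∏ k, algebraMap (Polynomial ℂ) (RatFunc ℂ) (e k) ^ s k := fun s => coe_prod_zpow F E s
  have hker' : ∀ c : F, ∃ d, c - algebraMap ℂ F (ev c) = (tF - 1) * d := by
    -- the elements congruent to a constant modulo `t - 1` contain the generators of `F`
    have main : ∀ f ∈ F, ∃ d ∈ F, ∃ z : ℂ, f - algebraMap ℂ _ z = (RatFunc.X - 1) * d := by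
      intro f hf
      rw [hF] at hf
      induction hf using Algebra.adjoin_induction with
      | mem f hf =>
        rcases hf with (rfl | rfl) | ⟨k, rfl⟩
        · exact ⟨1, F.one_mem, 1, by simp⟩
        · refine ⟨-RatFunc.X⁻¹, F.neg_mem (by
            rw [hF]; exact Algebra.subset_adjoin (Or.inl (Or.inr rfl))), 1, ?_⟩
          have := RatFunc.X_ne_zero (K := ℂ)
          rw [map_one]
          field_simp
          ring
        · obtain ⟨d, hd, -⟩ := hE k
          refine ⟨-(d * (algebraMap (Polynomial ℂ) (RatFunc ℂ) (e k))⁻¹),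
            F.neg_mem (F.mul_mem d.2 (hinv k)), 1, ?_⟩
          have hd' : algebraMap (Polynomial ℂ) (RatFunc ℂ) (e k) - 1 =
              (RatFunc.X - 1) * (d : RatFunc ℂ) := by
            have := congrArg (fun c : F => (c : RatFunc ℂ)) hd
            simpa [htF, E] using this
          have := he0 k
          rw [map_one]
          field_simp
          linear_combination -hd'
      | algebraMap z => exact ⟨0, F.zero_mem, z, by simp⟩
      | add f g _ _ hf hg =>
        obtain ⟨d, hd, z, h⟩ := hf
        obtain ⟨d', hd', z', h'⟩ := hg
        exact ⟨d + d', F.add_mem hd hd', z + z', by rw [map_add]; linear_combination h + h'⟩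
      | mul f g _ hg' hf hg =>
        obtain ⟨d, hd, z, h⟩ := hf
        obtain ⟨d', hd', z', h'⟩ := hg
        refine ⟨d * g + algebraMap ℂ _ z * d', F.add_mem (F.mul_mem hd (hF ▸ hg'))
          (F.mul_mem (F.algebraMap_mem z) hd'), z * z', ?_⟩
        rw [map_mul]
        linear_combination g * h + algebraMap ℂ (RatFunc ℂ) z * h'
    intro c
    obtain ⟨d, hd, z, h⟩ := main c c.2
    have h1 : c - algebraMap ℂ F z = (tF - 1) * ⟨d, hd⟩ := by
      ext
      simpa [htF] using h
    have h2 : ev c = z := by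
      have := congrArg ev h1
      rwa [map_mul, hevt, zero_mul, map_sub, hevC, sub_eq_zero] at this
    exact ⟨⟨d, hd⟩, by rw [h2, h1]⟩
  have hlamadd : ∀ i j k, slam i j k + slam j i k = 0 := by
    intro i j k
    refine congrFun (hfree (fun k => slam i j k + slam j i k) ?_) k
    rw [← hlam i j, hslam i j, hslam j i, ← Finset.prod_mul_distrib]
    exact Finset.prod_congr rfl fun k _ => zpow_add₀ (hη0 k) _ _
  refine core (K := RatFunc ℂ) (F := F) Subtype.val_injective hqti hlti ?_ ?_ ev
    (fun z => ⟨_, hevC z⟩) (tF - 1) hτ0 hevt ?_ dq ?_ dlam ?_ tA ?_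
  · intro i j
    ext
    rw [MulMemClass.coe_mul, hlt, hlt, ← Finset.prod_mul_distrib]
    refine Finset.prod_eq_one fun k _ => ?_
    rw [← zpow_add₀ (he0 k), hlamadd, zpow_zero]
  · intro i m hm h
    have h1 := congrArg (fun c : F => (c : RatFunc ℂ)) h
    simp only [SubmonoidClass.coe_pow, hqt, OneMemClass.coe_one] at h1
    have h2 := exponents_eq_zero hη0 hfree heq hm h1
    exact hq1 i (by rw [hsq, h2]; simp)
  · intro c hc
    obtain ⟨d, hd⟩ := hker' c
    exact ⟨d, by rw [← hd, hc, map_zero, sub_zero]⟩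
  · intro i
    have h1 : qt i = ((∏ k, E k ^ sq i k : Fˣ) : F) := Subtype.ext (by rw [hqt, hEcoe])
    rw [h1, hdq]
    exact deriv_prod_zpow ev (tF - 1) hevt E μ hE _
  · intro i j
    have h1 : lt i j = ((∏ k, E k ^ slam i j k : Fˣ) : F) := Subtype.ext (by rw [hlt, hEcoe])
    rw [h1, hdlam]
    exact deriv_prod_zpow ev (tF - 1) hevt E μ hE _
  · rw [htA, mk_algebraMap, map_sub, map_one]
end

section
/- In A_q, with z_0 = 1 and z_i = 1 + Σ_{k=1}^{i} y_k x_k, the following hold: x_i y_i − q_i y_i x_i = (q_i − 1) z_{i−1} and x_i y_i − y_i x_i = (q_i − 1) z_i for 1 ≤ i ≤ n; y_j z_i = z_i y_j and x_j z_i = z_i x_j for i < j; y_j z_i = q_j⁻¹ z_i y_j and x_j z_i = q_j z_i x_j for i ≥ j; and z_i z_j = z_j z_i for all i, j. -/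
/-!
The elements `z_m` are handled through the partial sums `z_{m+1} = z_m + y_m x_m` (0-indexed).

For `k < j` both `y_j` and `x_j` commute with `y_k x_k`, since the scalars produced by the two
exchange relations are inverse to each other; hence they commute with `z_m` for `m ≤ j`.
For `k > j` the same computation gives `y_j (y_k x_k) = q_j⁻¹ (y_k x_k) y_j` and
`x_j (y_k x_k) = q_j (y_k x_k) x_j`. The step `m = j + 1` is where the Weyl relation enters:
`x_j y_j = q_j y_j x_j + (q_j - 1) z_j`, with `z_j` commuting with `x_j` and `y_j`, gives
`y_j z_{j+1} = q_j⁻¹ z_{j+1} y_j` and `x_j z_{j+1} = q_j z_{j+1} x_j`; adding the terms with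
`k > j` extends this to all `m > j`. Finally each `z_m` commutes with every `y_k x_k`, because
the scalars `q_k⁻¹` and `q_k` cancel, so the `z_m` commute with each other.
-/

/-- The defining relations of the algebra `A_q` (the rescaled multi-parameter
quantized Weyl algebra), on generators `Sum.inl i = y_i`, `Sum.inr i = x_i`. -/
inductive AqRel (n : ℕ) (q : Fin n → ℂ) (lam : Fin n → Fin n → ℂ) :
    FreeAlgebra ℂ (Fin n ⊕ Fin n) → FreeAlgebra ℂ (Fin n ⊕ Fin n) → Prop
  | yy (i j : Fin n) (h : i < j) : AqRel n q lam
      (FreeAlgebra.ι ℂ (Sum.inl j) * FreeAlgebra.ι ℂ (Sum.inl i))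
      (lam j i • (FreeAlgebra.ι ℂ (Sum.inl i) * FreeAlgebra.ι ℂ (Sum.inl j)))
  | yx (i j : Fin n) (h : i < j) : AqRel n q lam
      (FreeAlgebra.ι ℂ (Sum.inl j) * FreeAlgebra.ι ℂ (Sum.inr i))
      (lam i j • (FreeAlgebra.ι ℂ (Sum.inr i) * FreeAlgebra.ι ℂ (Sum.inl j)))
  | xy (i j : Fin n) (h : i < j) : AqRel n q lam
      (FreeAlgebra.ι ℂ (Sum.inr j) * FreeAlgebra.ι ℂ (Sum.inl i))
      ((q i * lam i j) • (FreeAlgebra.ι ℂ (Sum.inl i) * FreeAlgebra.ι ℂ (Sum.inr j)))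
  | xx (i j : Fin n) (h : i < j) : AqRel n q lam
      (FreeAlgebra.ι ℂ (Sum.inr j) * FreeAlgebra.ι ℂ (Sum.inr i))
      (((q i)⁻¹ * (lam i j)⁻¹) • (FreeAlgebra.ι ℂ (Sum.inr i) * FreeAlgebra.ι ℂ (Sum.inr j)))
  | weyl (i : Fin n) : AqRel n q lam
      (FreeAlgebra.ι ℂ (Sum.inr i) * FreeAlgebra.ι ℂ (Sum.inl i)
        - q i • (FreeAlgebra.ι ℂ (Sum.inl i) * FreeAlgebra.ι ℂ (Sum.inr i)))
      ((q i - 1) • (1 + ∑ k ∈ Finset.Iio i,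
        FreeAlgebra.ι ℂ (Sum.inl k) * FreeAlgebra.ι ℂ (Sum.inr k)))

/-- The generator `y_i` of `A_q`. -/
noncomputable def Yq (n : ℕ) (q : Fin n → ℂ) (lam : Fin n → Fin n → ℂ) (i : Fin n) :
    RingQuot (AqRel n q lam) :=
  RingQuot.mkAlgHom ℂ (AqRel n q lam) (FreeAlgebra.ι ℂ (Sum.inl i))

/-- The generator `x_i` of `A_q`. -/
noncomputable def Xq (n : ℕ) (q : Fin n → ℂ) (lam : Fin n → Fin n → ℂ) (i : Fin n) :
    RingQuot (AqRel n q lam) :=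
  RingQuot.mkAlgHom ℂ (AqRel n q lam) (FreeAlgebra.ι ℂ (Sum.inr i))

/-- The element `z_m = 1 + ∑_{k=1}^m y_k x_k` of `A_q` (1-indexed: the sum is over
the generators with (0-indexed) index `< m`). -/
noncomputable def Zq (n : ℕ) (q : Fin n → ℂ) (lam : Fin n → Fin n → ℂ) (m : ℕ) :
    RingQuot (AqRel n q lam) :=
  1 + ∑ k ∈ Finset.univ.filter (fun k : Fin n => (k : ℕ) < m), Yq n q lam k * Xq n q lam k

/-! ### Scalar commutation in an algebra -/

/-- If `a` commutes with `b` and `c` up to scalars `r` and `s`, it commutes with `b * c` up to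
`r * s`. -/
lemma scalar_comm_mul {A : Type*} [Ring A] [Algebra ℂ A] {a b c : A} {r s t : ℂ}
    (hb : a * b = r • (b * a)) (hc : a * c = s • (c * a)) (ht : r * s = t) :
    a * (b * c) = t • (b * c * a) := by
  rw [← mul_assoc, hb, smul_mul_assoc, mul_assoc, hc, mul_smul_comm, smul_smul, ht, mul_assoc]

lemma scalar_comm_symm {A : Type*} [Ring A] [Algebra ℂ A] {a b : A} {r s : ℂ}
    (h : a * b = r • (b * a)) (hs : s * r = 1) : b * a = s • (a * b) := by
  rw [h, smul_smul, hs, one_smul]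

/-- The Weyl relation makes `y` commute with `z + y * x` up to `q⁻¹`. -/
lemma weyl_y {A : Type*} [Ring A] [Algebra ℂ A] {x y z : A} {q : ℂ} (hq : q ≠ 0)
    (hw : x * y - q • (y * x) = (q - 1) • z) (hy : y * z = z * y) :
    y * (z + y * x) = q⁻¹ • ((z + y * x) * y) := by
  rw [sub_eq_iff_eq_add] at hw
  rw [add_mul, mul_assoc y x y, hw, mul_add, mul_add, mul_smul_comm, mul_smul_comm, hy]
  match_scalars <;> field_simp
  ring

/-- The Weyl relation makes `x` commute with `z + y * x` up to `q`. -/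
lemma weyl_x {A : Type*} [Ring A] [Algebra ℂ A] {x y z : A} {q : ℂ}
    (hw : x * y - q • (y * x) = (q - 1) • z) (hx : x * z = z * x) :
    x * (z + y * x) = q • ((z + y * x) * x) := by
  rw [sub_eq_iff_eq_add] at hw
  rw [mul_add, ← mul_assoc x y x, hw, add_mul, add_mul, smul_mul_assoc, smul_mul_assoc, hx]
  module

/-! ### The defining relations in the quotient -/

section Relations

variable {n : ℕ} {q : Fin n → ℂ} {lam : Fin n → Fin n → ℂ}

lemma Yq_mul_Yq {i j : Fin n} (h : i < j) :
    Yq n q lam j * Yq n q lam i = lam j i • (Yq n q lam i * Yq n q lam j) := by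
  simpa [Yq] using RingQuot.mkAlgHom_rel ℂ (AqRel.yy (q := q) (lam := lam) i j h)

lemma Yq_mul_Xq {i j : Fin n} (h : i < j) :
    Yq n q lam j * Xq n q lam i = lam i j • (Xq n q lam i * Yq n q lam j) := by
  simpa [Yq, Xq] using RingQuot.mkAlgHom_rel ℂ (AqRel.yx (q := q) (lam := lam) i j h)

lemma Xq_mul_Yq {i j : Fin n} (h : i < j) :
    Xq n q lam j * Yq n q lam i = (q i * lam i j) • (Yq n q lam i * Xq n q lam j) := by
  simpa only [Yq, Xq, map_mul, map_smul] using
    RingQuot.mkAlgHom_rel ℂ (AqRel.xy (q := q) (lam := lam) i j h)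

lemma Xq_mul_Xq {i j : Fin n} (h : i < j) :
    Xq n q lam j * Xq n q lam i = ((q i)⁻¹ * (lam i j)⁻¹) • (Xq n q lam i * Xq n q lam j) := by
  simpa only [Xq, map_mul, map_smul] using
    RingQuot.mkAlgHom_rel ℂ (AqRel.xx (q := q) (lam := lam) i j h)

lemma Xq_mul_Yq_self (i : Fin n) :
    Xq n q lam i * Yq n q lam i - q i • (Yq n q lam i * Xq n q lam i)
      = (q i - 1) • Zq n q lam (i : ℕ) := by
  have h := RingQuot.mkAlgHom_rel ℂ (AqRel.weyl (q := q) (lam := lam) i)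
  simp only [map_sub, map_mul, map_smul, map_add, map_one, map_sum] at h
  have hs : Finset.univ.filter (fun k : Fin n => (k : ℕ) < (i : ℕ)) = Finset.Iio i := by
    ext k
    simp
  rw [Zq, hs]
  exact h

lemma Zq_succ (i : Fin n) :
    Zq n q lam ((i : ℕ) + 1) = Zq n q lam (i : ℕ) + Yq n q lam i * Xq n q lam i := by
  have hs : Finset.univ.filter (fun k : Fin n => (k : ℕ) < (i : ℕ) + 1)
      = insert i (Finset.univ.filter (fun k : Fin n => (k : ℕ) < (i : ℕ))) := by
    ext k
    simp only [Finset.mem_filter, Finset.mem_univ, true_and, Finset.mem_insert, Fin.ext_iff]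
    omega
  rw [Zq, Zq, hs, Finset.sum_insert (by simp)]
  abel

lemma Zq_succ_of_le {m : ℕ} (h : n ≤ m) : Zq n q lam (m + 1) = Zq n q lam m := by
  rw [Zq, Zq]
  congr 2
  ext k
  have := k.isLt
  simp only [Finset.mem_filter, Finset.mem_univ, true_and]
  omega

/-! ### Commutation of the generators with the elements `z_m` -/

lemma comm_Zq_of_le (hq0 : ∀ i, q i ≠ 0) (hlam : ∀ i j, lam i j * lam j i = 1)
    (j : Fin n) (m : ℕ) (hm : m ≤ (j : ℕ)) :
    Yq n q lam j * Zq n q lam m = Zq n q lam m * Yq n q lam j ∧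
      Xq n q lam j * Zq n q lam m = Zq n q lam m * Xq n q lam j := by
  have key : ∀ k : Fin n, (k : ℕ) < m →
      Yq n q lam j * (Yq n q lam k * Xq n q lam k) =
          Yq n q lam k * Xq n q lam k * Yq n q lam j ∧
        Xq n q lam j * (Yq n q lam k * Xq n q lam k) =
          Yq n q lam k * Xq n q lam k * Xq n q lam j := by
    intro k hk
    have hkj : k < j := Fin.lt_def.2 (by omega)
    have hl : lam k j ≠ 0 := left_ne_zero_of_mul_eq_one (hlam k j)
    have hqk := hq0 k
    constructor
    · rw [scalar_comm_mul (Yq_mul_Yq hkj) (Yq_mul_Xq hkj) (hlam j k), one_smul]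
    · rw [scalar_comm_mul (Xq_mul_Yq hkj) (Xq_mul_Xq hkj) (t := 1) (by field_simp), one_smul]
  simp only [Zq, mul_add, add_mul, mul_one, one_mul, Finset.mul_sum, Finset.sum_mul]
  constructor
  · congr 1
    exact Finset.sum_congr rfl fun k hk => (key k (by simpa using hk)).1
  · congr 1
    exact Finset.sum_congr rfl fun k hk => (key k (by simpa using hk)).2

lemma comm_Zq_of_lt (hq0 : ∀ i, q i ≠ 0) (hlam : ∀ i j, lam i j * lam j i = 1)
    (j : Fin n) (m : ℕ) (hm : (j : ℕ) + 1 ≤ m) :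
    Yq n q lam j * Zq n q lam m = (q j)⁻¹ • (Zq n q lam m * Yq n q lam j) ∧
      Xq n q lam j * Zq n q lam m = q j • (Zq n q lam m * Xq n q lam j) := by
  have hqj := hq0 j
  induction m, hm using Nat.le_induction with
  | base =>
    obtain ⟨hy, hx⟩ := comm_Zq_of_le hq0 hlam j j le_rfl
    rw [Zq_succ]
    exact ⟨weyl_y hqj (Xq_mul_Yq_self j) hy, weyl_x (Xq_mul_Yq_self j) hx⟩
  | succ m hm ih =>
    rcases lt_or_ge m n with hmn | hmn
    · have hjk : j < (⟨m, hmn⟩ : Fin n) := Fin.lt_def.2 hm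
      have hz := Zq_succ (q := q) (lam := lam) ⟨m, hmn⟩
      dsimp only at hz
      generalize (⟨m, hmn⟩ : Fin n) = k at hjk hz
      have hl : lam j k ≠ 0 := left_ne_zero_of_mul_eq_one (hlam j k)
      have hy : Yq n q lam j * (Yq n q lam k * Xq n q lam k) =
          (q j)⁻¹ • (Yq n q lam k * Xq n q lam k * Yq n q lam j) :=
        scalar_comm_mul (scalar_comm_symm (Yq_mul_Yq hjk) (hlam j k))
          (scalar_comm_symm (s := (q j * lam j k)⁻¹) (Xq_mul_Yq hjk) (by field_simp))
          (by field_simp)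
      have hx : Xq n q lam j * (Yq n q lam k * Xq n q lam k) =
          q j • (Yq n q lam k * Xq n q lam k * Xq n q lam j) :=
        scalar_comm_mul (scalar_comm_symm (s := (lam j k)⁻¹) (Yq_mul_Xq hjk) (by field_simp))
          (scalar_comm_symm (s := q j * lam j k) (Xq_mul_Xq hjk) (by field_simp))
          (by field_simp)
      rw [hz, mul_add, mul_add, add_mul, add_mul, ih.1, ih.2, hy, hx, smul_add, smul_add]
      exact ⟨rfl, rfl⟩
    · rw [Zq_succ_of_le hmn]
      exact ih

lemma Zq_commute_mul (hq0 : ∀ i, q i ≠ 0) (hlam : ∀ i j, lam i j * lam j i = 1)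
    (k : Fin n) (m : ℕ) : Commute (Zq n q lam m) (Yq n q lam k * Xq n q lam k) := by
  rcases Nat.lt_or_ge (k : ℕ) m with h | h
  · obtain ⟨hy, hx⟩ := comm_Zq_of_lt hq0 hlam k m h
    have hqk := hq0 k
    have := scalar_comm_mul (scalar_comm_symm (s := q k) hy (by field_simp))
      (scalar_comm_symm (s := (q k)⁻¹) hx (by field_simp)) (t := 1) (by field_simp)
    rwa [one_smul] at this
  · obtain ⟨hy, hx⟩ := comm_Zq_of_le hq0 hlam k m h
    exact Commute.mul_right hy.symm hx.symm

end Relations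

/-- relations among the elements `z_i` in `A_q`. -/
theorem stmt_11 (n : ℕ) (q : Fin n → ℂ) (hq0 : ∀ i, q i ≠ 0) (hq1 : ∀ i, q i ≠ 1)
    (lam : Fin n → Fin n → ℂ) (hlam : ∀ i j, lam i j * lam j i = 1)
    (hlamii : ∀ i, lam i i = 1) :
    (∀ i : Fin n, Xq n q lam i * Yq n q lam i - q i • (Yq n q lam i * Xq n q lam i)
      = (q i - 1) • Zq n q lam (i : ℕ)) ∧
    (∀ i : Fin n, Xq n q lam i * Yq n q lam i - Yq n q lam i * Xq n q lam i
      = (q i - 1) • Zq n q lam ((i : ℕ) + 1)) ∧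
    (∀ (j : Fin n) (m : ℕ), m ≤ n → m ≤ (j : ℕ) →
      Yq n q lam j * Zq n q lam m = Zq n q lam m * Yq n q lam j ∧
      Xq n q lam j * Zq n q lam m = Zq n q lam m * Xq n q lam j) ∧
    (∀ (j : Fin n) (m : ℕ), m ≤ n → (j : ℕ) < m →
      Yq n q lam j * Zq n q lam m = (q j)⁻¹ • (Zq n q lam m * Yq n q lam j) ∧
      Xq n q lam j * Zq n q lam m = q j • (Zq n q lam m * Xq n q lam j)) ∧
    (∀ a b : ℕ, Zq n q lam a * Zq n q lam b = Zq n q lam b * Zq n q lam a) := by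
  refine ⟨Xq_mul_Yq_self, fun i => ?_, fun j m _ h => comm_Zq_of_le hq0 hlam j m h,
    fun j m _ h => comm_Zq_of_lt hq0 hlam j m h, fun a b => ?_⟩
  · have h := Xq_mul_Yq_self (q := q) (lam := lam) i
    rw [sub_eq_iff_eq_add] at h
    rw [Zq_succ, h]
    module
  · change Commute (Zq n q lam a) (Zq n q lam b)
    conv => arg 2; rw [Zq]
    exact (Commute.one_right _).add_right
      (Commute.sum_right _ _ _ fun k _ => Zq_commute_mul hq0 hlam k a)
end

section
/- In the multi-parameter Poisson Weyl algebra A_1, with z_0 = 1 and z_i = 1 + Σ_{k=1}^{i} y_k x_k, the following hold: {x_i, y_i} − q̃_i'(1) y_i x_i = q̃_i'(1) z_{i−1} and {x_i, y_i} = q̃_i'(1) z_i for 1 ≤ i ≤ n; {y_j, z_i} = 0 and {x_j, z_i} = 0 for i < j; {y_j, z_i} = −q̃_j'(1) y_j z_i and {x_j, z_i} = q̃_j'(1) x_j z_i for i ≥ j; and {z_i, z_j} = 0 for all i, j. -/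
namespace PoissonBr

variable {R : Type} [CommRing R] (B : PoissonBr R)

lemma add_right (a b c : R) : B.br a (b + c) = B.br a b + B.br a c := by
  rw [B.skew, B.add_left, B.skew b, B.skew c]; ring

lemma leibniz_right (a b c : R) : B.br a (b * c) = b * B.br a c + B.br a b * c := by
  rw [B.skew, B.leibniz, B.skew b, B.skew c]; ring

lemma one_left (a : R) : B.br 1 a = 0 := by
  have h := B.leibniz 1 1 a
  rw [mul_one] at h
  linear_combination -h

lemma one_right (a : R) : B.br a 1 = 0 := by
  rw [B.skew, one_left, neg_zero]

/-- Skew-symmetry only gives `2 {a, a} = 0`; the factor `2` cancels in characteristic zero. -/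
lemma self [IsDomain R] [CharZero R] (a : R) : B.br a a = 0 :=
  self_eq_neg.mp (B.skew a a)

end PoissonBr

lemma zP_zero (n : ℕ) : zP n 0 = 1 := by
  simp [zP]

lemma zP_succ (n : ℕ) (i : Fin n) :
    zP n ((i : ℕ) + 1) = zP n (i : ℕ) + yP n i * xP n i := by
  have h : Finset.univ.filter (fun k : Fin n => (k : ℕ) < (i : ℕ) + 1)
      = insert i (Finset.univ.filter (fun k : Fin n => (k : ℕ) < (i : ℕ))) := by
    ext k
    simp [Fin.ext_iff]
    omega
  unfold zP
  rw [h, Finset.sum_insert (by simp)]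
  ring

/-- The definition of `zP n m` makes sense for every natural `m`; it is constant for `m ≥ n`. -/
lemma zP_succ_of_le (n m : ℕ) (h : n ≤ m) : zP n (m + 1) = zP n m := by
  unfold zP
  congr 2
  ext k
  have := k.isLt
  simp
  omega

/-- relations among the elements `z_i` in the multi-parameter Poisson
Weyl algebra `A₁`. -/
theorem stmt_12 (n r : ℕ)
    -- Q and Λ with G(Q,Λ) torsion free, a basis η of G(Q,Λ), and ℚ-linearly
    -- independent complex numbers μ; `c̃'(1) = ∑ s_k μ_k` for `c = ∏ η_k ^ s_k`
    (q : Fin n → ℂ) (hq0 : ∀ i, q i ≠ 0) (hq1 : ∀ i, q i ≠ 1)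
    (lam : Fin n → Fin n → ℂ) (hlam : ∀ i j, lam i j * lam j i = 1)
    (hlamii : ∀ i, lam i i = 1)
    (η : Fin r → ℂ) (hη0 : ∀ k, η k ≠ 0)
    (hfree : ∀ a : Fin r → ℤ, ∏ k, η k ^ a k = 1 → a = 0)
    (μ : Fin r → ℂ) (hμ : LinearIndependent ℚ μ)
    (sq : Fin n → Fin r → ℤ) (hsq : ∀ i, q i = ∏ k, η k ^ sq i k)
    (slam : Fin n → Fin n → Fin r → ℤ) (hslam : ∀ i j, lam i j = ∏ k, η k ^ slam i j k)
    (dq : Fin n → ℂ) (hdq : ∀ i, dq i = ∑ k, (sq i k : ℂ) * μ k)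
    (dlam : Fin n → Fin n → ℂ) (hdlam : ∀ i j, dlam i j = ∑ k, (slam i j k : ℂ) * μ k)
    -- the Poisson bracket of the multi-parameter Poisson Weyl algebra `A₁`
    (B : PoissonBr (MvPolynomial (Fin n ⊕ Fin n) ℂ))
    (hBsmul : ∀ (c : ℂ) (a b : MvPolynomial (Fin n ⊕ Fin n) ℂ), B.br (c • a) b = c • B.br a b)
    (hByy : ∀ i j : Fin n, i < j → B.br (yP n j) (yP n i) = dlam j i • (yP n i * yP n j))
    (hByx : ∀ i j : Fin n, i < j → B.br (yP n j) (xP n i) = dlam i j • (xP n i * yP n j))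
    (hBxy : ∀ i j : Fin n, i < j →
      B.br (xP n j) (yP n i) = (dq i + dlam i j) • (yP n i * xP n j))
    (hBxx : ∀ i j : Fin n, i < j →
      B.br (xP n j) (xP n i) = (-(dq i + dlam i j)) • (xP n i * xP n j))
    (hBxyi : ∀ i : Fin n, B.br (xP n i) (yP n i) = dq i • zP n ((i : ℕ) + 1))
    :
    (∀ i : Fin n, B.br (xP n i) (yP n i) - dq i • (yP n i * xP n i) = dq i • zP n (i : ℕ)) ∧
    (∀ i : Fin n, B.br (xP n i) (yP n i) = dq i • zP n ((i : ℕ) + 1)) ∧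
    (∀ (j : Fin n) (m : ℕ), m ≤ n → m ≤ (j : ℕ) →
      B.br (yP n j) (zP n m) = 0 ∧ B.br (xP n j) (zP n m) = 0) ∧
    (∀ (j : Fin n) (m : ℕ), m ≤ n → (j : ℕ) < m →
      B.br (yP n j) (zP n m) = (-(dq j)) • (yP n j * zP n m) ∧
      B.br (xP n j) (zP n m) = dq j • (xP n j * zP n m)) ∧
    (∀ a b : ℕ, B.br (zP n a) (zP n b) = 0) := by
  -- additivity of `c ↦ c̃'(1)`, applied to `λ_ij λ_ji = 1`
  have hanti : ∀ i j, dlam i j + dlam j i = 0 := by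
    intro i j
    have h := hfree (fun k => slam i j k + slam j i k) (by
      rw [← hlam i j, hslam i j, hslam j i, ← Finset.prod_mul_distrib]
      exact Finset.prod_congr rfl fun k _ => zpow_add₀ (hη0 k) _ _)
    rw [hdlam, hdlam, ← Finset.sum_add_distrib]
    refine Finset.sum_eq_zero fun k _ => ?_
    have hk : ((slam i j k + slam j i k : ℤ) : ℂ) = 0 := by
      exact_mod_cast congrFun h k
    push_cast at hk
    linear_combination μ k * hk
  have hantiC : ∀ i j, (MvPolynomial.C (dlam i j) + MvPolynomial.C (dlam j i) :
      MvPolynomial (Fin n ⊕ Fin n) ℂ) = 0 := by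
    intro i j
    rw [← map_add, hanti, map_zero]
  simp only [MvPolynomial.smul_eq_C_mul, map_add, map_neg] at *
  -- brackets of the generators with `y_k x_k`, for `k < j`, `k > j` and `k = j`
  have hlt : ∀ k j : Fin n, k < j →
      B.br (yP n j) (yP n k * xP n k) = 0 ∧ B.br (xP n j) (yP n k * xP n k) = 0 := by
    intro k j h
    rw [B.leibniz_right, B.leibniz_right, hByy k j h, hByx k j h, hBxy k j h, hBxx k j h]
    constructor
    · linear_combination (yP n k * xP n k * yP n j) * hantiC k j
    · ring
  have hgt : ∀ k j : Fin n, j < k →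
      B.br (yP n j) (yP n k * xP n k) =
        -MvPolynomial.C (dq j) * (yP n j * (yP n k * xP n k)) ∧
      B.br (xP n j) (yP n k * xP n k) =
        MvPolynomial.C (dq j) * (xP n j * (yP n k * xP n k)) := by
    intro k j h
    rw [B.leibniz_right, B.leibniz_right, B.skew (yP n j), B.skew (yP n j), B.skew (xP n j),
      B.skew (xP n j), hByy j k h, hByx j k h, hBxy j k h, hBxx j k h]
    constructor
    · linear_combination (-yP n k * xP n k * yP n j) * hantiC k j
    · ring
  have heq : ∀ j : Fin n,
      B.br (yP n j) (yP n j * xP n j) =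
        -MvPolynomial.C (dq j) * (yP n j * zP n ((j : ℕ) + 1)) ∧
      B.br (xP n j) (yP n j * xP n j) =
        MvPolynomial.C (dq j) * (xP n j * zP n ((j : ℕ) + 1)) := by
    intro j
    rw [B.leibniz_right, B.leibniz_right, B.self, B.self, B.skew (yP n j), hBxyi]
    constructor <;> ring
  have h3 : ∀ (j : Fin n) (m : ℕ), m ≤ (j : ℕ) →
      B.br (yP n j) (zP n m) = 0 ∧ B.br (xP n j) (zP n m) = 0 := by
    intro j m
    induction m with
    | zero => intro _; simp [zP_zero, B.one_right]
    | succ m ih =>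
      intro hm
      obtain ⟨h1, h2⟩ := ih (by omega)
      obtain ⟨h4, h5⟩ := hlt ⟨m, by omega⟩ j (Fin.lt_def.mpr (by simpa using hm))
      have hz := zP_succ n ⟨m, by omega⟩
      simp only at hz
      rw [hz, B.add_right, B.add_right, h1, h2, h4, h5]
      simp
  have h4 : ∀ (j : Fin n) (m : ℕ), (j : ℕ) + 1 ≤ m →
      B.br (yP n j) (zP n m) = -MvPolynomial.C (dq j) * (yP n j * zP n m) ∧
      B.br (xP n j) (zP n m) = MvPolynomial.C (dq j) * (xP n j * zP n m) := by
    intro j m hm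
    induction m, hm using Nat.le_induction with
    | base =>
      obtain ⟨h1, h2⟩ := h3 j j le_rfl
      obtain ⟨h5, h6⟩ := heq j
      constructor
      · rw [← h5, zP_succ, B.add_right, h1, zero_add]
      · rw [← h6, zP_succ, B.add_right, h2, zero_add]
    | succ m hm ih =>
      obtain ⟨h1, h2⟩ := ih
      rcases lt_or_ge m n with hmn | hmn
      · obtain ⟨h5, h6⟩ := hgt ⟨m, hmn⟩ j (Fin.lt_def.mpr hm)
        have hz := zP_succ n ⟨m, hmn⟩
        simp only at hz
        rw [hz, B.add_right, B.add_right, h1, h2, h5, h6]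
        constructor <;> ring
      · rw [zP_succ_of_le n m hmn]
        exact ⟨h1, h2⟩
  -- the weights of `y_k` and `x_k` under `{·, z_b}` cancel
  have hcomm : ∀ (k : Fin n) (b : ℕ), B.br (yP n k * xP n k) (zP n b) = 0 := by
    intro k b
    rw [B.leibniz]
    rcases Nat.lt_or_ge (k : ℕ) b with h | h
    · rw [(h4 k b h).1, (h4 k b h).2]; ring
    · rw [(h3 k b h).1, (h3 k b h).2]; ring
  refine ⟨fun i => ?_, hBxyi, fun j m _ h => h3 j m h, fun j m _ h => h4 j m h, fun a b => ?_⟩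
  · rw [hBxyi, zP_succ]; ring
  · induction a with
    | zero => rw [zP_zero, B.one_left]
    | succ a ih =>
      rcases lt_or_ge a n with han | han
      · have hz := zP_succ n ⟨a, han⟩
        simp only at hz
        rw [hz, B.add_left, ih, hcomm, add_zero]
      · rw [zP_succ_of_le n a han, ih]
end
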